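/- Fix an integer N̄ ≥ 0 and M ≥ 1. Let T > 0, let ϱ ∈ C^∞([0,T]×𝕋³) with ϱ ≥ ε₀ for some ε₀ > 0, and let m ∈ C^∞([0,T]×𝕋³; ℝ³). Let λ ≥ 1, δ ∈ (0,1] with λδ^{1/2} ≥ 1, and ℓ ∈ (0,1), and assume ‖m‖₀ ≤ M and ‖m‖₁ ≤ M λ δ^{1/2}. Set m_ℓ = P_{≤ℓ^{−1}} m (cutoff in the space variable) and define Q(m,m) = div( m_ℓ ⊗ m_ℓ / ϱ − P_{≤ℓ^{−1}}( m ⊗ m / ϱ ) ). Then there is a constant C depending only on N̄, M, ε₀, finitely many derivatives of ϱ, and the fixed cutoff function φ, such that for every integer N with 0 ≤ N ≤ N̄, ‖Q(m,m)‖_N ≤ C ℓ^{1−N} (λ δ^{1/2})². -/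

import Mathlib

open MeasureTheory

noncomputable section

/-- Points of `ℝ³`. -/
abbrev V3 : Type := Fin 3 → ℝ

/-- The fundamental domain `[-π, π]³` of the torus `𝕋³`. -/
def T3 : Set V3 := Set.Icc (fun _ => -Real.pi) (fun _ => Real.pi)

/-- The `i`-th standard basis vector of `ℝ³`. -/
def e3 (i : Fin 3) : V3 := Pi.single i 1

/-- A time-dependent function on `ℝ³` is (`2π`-)periodic in space. -/
def PerSpaceT {α : Type*} (f : ℝ × V3 → α) : Prop :=
  ∀ (t : ℝ) (x : V3) (v : Fin 3 → ℤ), f (t, fun i => x i + 2 * Real.pi * v i) = f (t, x)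

/-- Partial derivative in the `i`-th space direction. -/
def pX {F : Type*} [NormedAddCommGroup F] [NormedSpace ℝ F]
    (i : Fin 3) (f : ℝ × V3 → F) (tx : ℝ × V3) : F :=
  fderiv ℝ (fun y => f (tx.1, y)) tx.2 (e3 i)

/-- The Euclidean norm on `ℝ³`. -/
def enorm3 (x : V3) : ℝ := Real.sqrt (∑ i, x i ^ 2)

/-- `Jof S` is the largest integer `J` with `2^J ≤ S`. -/
def Jof (S : ℝ) : ℤ := ⌊Real.logb 2 S⌋

/-- The `k`-th Fourier coefficient of a (`2π`-)periodic function on `ℝ³`. -/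
def fcoef (g : V3 → ℝ) (k : Fin 3 → ℤ) : ℂ :=
  (((2 * Real.pi) ^ (3 : ℕ))⁻¹ : ℝ) •
    ∫ x in T3, (g x : ℂ) * Complex.exp (-(Complex.I * ((∑ i, (k i : ℝ) * x i : ℝ) : ℂ)))

/-- The low-frequency cutoff `P_{≤S}` associated with the cutoff function `φ`. -/
def Pse (φ : V3 → ℝ) (S : ℝ) (g : V3 → ℝ) (x : V3) : ℝ :=
  (∑' k : Fin 3 → ℤ,
      ((φ (fun i => (k i : ℝ) / (2 : ℝ) ^ Jof S) : ℝ) : ℂ) * fcoef g k *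
        Complex.exp (Complex.I * ((∑ i, (k i : ℝ) * x i : ℝ) : ℂ))).re

/-- `P_{≤S}` applied in the space variable to a time-dependent function. -/
def PseT (φ : V3 → ℝ) (S : ℝ) (f : ℝ × V3 → ℝ) (tx : ℝ × V3) : ℝ :=
  Pse φ S (fun y => f (tx.1, y)) tx.2

/-- The hypotheses on the fixed cutoff function `φ`. -/
def IsCutoff (φ : V3 → ℝ) : Prop :=
  ContDiff ℝ (⊤ : ℕ∞) φ ∧ (∀ x y : V3, enorm3 x = enorm3 y → φ x = φ y) ∧
    (∀ x : V3, enorm3 x ≤ 1 → φ x = 1) ∧ (∀ x : V3, 2 ≤ enorm3 x → φ x = 0)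

/-- The commutator `[g, P_{≤ℓ⁻¹}] f = g · P_{≤ℓ⁻¹} f - P_{≤ℓ⁻¹}(g f)`. -/
def commMul (φ : V3 → ℝ) (ℓ : ℝ) (g f : ℝ × V3 → ℝ) (tx : ℝ × V3) : ℝ :=
  g tx * PseT φ ℓ⁻¹ f tx - PseT φ ℓ⁻¹ (fun s => g s * f s) tx

/-- The commutator `[v·∇, P_{≤ℓ⁻¹}] F = v·∇(P_{≤ℓ⁻¹}F) - P_{≤ℓ⁻¹}(v·∇F)`. -/
def commAdv (φ : V3 → ℝ) (ℓ : ℝ) (v : ℝ × V3 → V3) (F : ℝ × V3 → ℝ) (tx : ℝ × V3) : ℝ :=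
  (∑ i : Fin 3, v tx i * pX i (PseT φ ℓ⁻¹ F) tx)
    - PseT φ ℓ⁻¹ (fun s => ∑ i : Fin 3, v s i * pX i F s) tx

/-- The commutator `[v·∇, P_{>ℓ⁻¹}] F` with the high-frequency cutoff `P_{>S} = id - P_{≤S}`. -/
def commAdvHigh (φ : V3 → ℝ) (ℓ : ℝ) (v : ℝ × V3 → V3) (F : ℝ × V3 → ℝ) (tx : ℝ × V3) : ℝ :=
  (∑ i : Fin 3, v tx i * pX i (fun s => F s - PseT φ ℓ⁻¹ F s) tx)
    - ((∑ i : Fin 3, v tx i * pX i F tx)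
        - PseT φ ℓ⁻¹ (fun s => ∑ i : Fin 3, v s i * pX i F s) tx)

/-- `P_{≤ℓ⁻¹}` applied componentwise to a time-dependent vector field. -/
def PseV (φ : V3 → ℝ) (S : ℝ) (m : ℝ × V3 → V3) (tx : ℝ × V3) : V3 :=
  fun i => PseT φ S (fun s => m s i) tx

/-- The quadratic commutator
`Q(m,m) = div ( m_ℓ ⊗ m_ℓ / ϱ - P_{≤ℓ⁻¹}( m ⊗ m / ϱ ) )` with `m_ℓ = P_{≤ℓ⁻¹} m`. -/
def Qcomm (φ : V3 → ℝ) (ℓ : ℝ) (ϱ : ℝ × V3 → ℝ) (m : ℝ × V3 → V3)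
    (tx : ℝ × V3) : V3 :=
  fun i => ∑ j : Fin 3,
    pX j (fun s => PseV φ ℓ⁻¹ m s i * PseV φ ℓ⁻¹ m s j / ϱ s
        - PseT φ ℓ⁻¹ (fun s' => m s' i * m s' j / ϱ s') s) tx

/-- Smooth Fourier symbols supported in the cube of side length four. -/
def IsSymbol (η : V3 → ℂ) : Prop :=
  ContDiff ℝ (⊤ : ℕ∞) η ∧ ∀ ξ : V3, 2 ≤ ‖ξ‖ → η ξ = 0

lemma norm_e3 (j : Fin 3) : ‖e3 j‖ = 1 := by
  rw [e3, Pi.norm_single, norm_one]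

/-- The symbol of the partial derivative of a Fourier multiplier, up to scaling. -/
lemma IsSymbol.mul_coord {η : V3 → ℂ} (hη : IsSymbol η) (j : Fin 3) :
    IsSymbol (fun ξ => Complex.I * (ξ j : ℂ) * η ξ) := by
  refine ⟨?_, fun ξ hξ => by simp [hη.2 ξ hξ]⟩
  have h1 : ContDiff ℝ (⊤ : ℕ∞) (fun ξ : V3 => (ξ j : ℂ)) :=
    Complex.ofRealCLM.contDiff.comp (contDiff_apply ℝ ℝ j)
  exact (contDiff_const.mul h1).mul hη.1

lemma IsSymbol.fderiv_apply {η : V3 → ℂ} (hη : IsSymbol η) (v : V3) :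
    IsSymbol (fun ξ => fderiv ℝ η ξ v) := by
  have hs : ContDiff ℝ (⊤ : ℕ∞) (fun ξ => fderiv ℝ η ξ v) :=
    (hη.1.fderiv_right (m := (⊤ : ℕ∞)) (by simp)).clm_apply contDiff_const
  refine ⟨hs, fun ξ hξ => ?_⟩
  have hcl : IsClosed {ζ : V3 | (fun ξ => fderiv ℝ η ξ v) ζ = 0} :=
    isClosed_eq hs.continuous continuous_const
  have hopen : ∀ ζ : V3, 2 < ‖ζ‖ → fderiv ℝ η ζ v = 0 := by
    intro ζ hζ
    have : η =ᶠ[nhds ζ] fun _ => 0 := by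
      filter_upwards [(isOpen_lt continuous_const continuous_norm).mem_nhds hζ] with y hy
      exact hη.2 y (le_of_lt hy)
    rw [this.fderiv_eq]; simp
  have hlim : Filter.Tendsto (fun s : ℝ => (1 + s) • ξ) (nhdsWithin 0 (Set.Ioi 0)) (nhds ξ) := by
    have : Continuous (fun s : ℝ => (1 + s) • ξ) := by fun_prop
    have := this.tendsto 0
    simp only [add_zero, one_smul] at this
    exact this.mono_left nhdsWithin_le_nhds
  refine hcl.mem_of_tendsto hlim ?_
  filter_upwards [self_mem_nhdsWithin] with s hs
  apply hopen
  rw [norm_smul, Real.norm_eq_abs, abs_of_pos (by linarith [Set.mem_Ioi.1 hs])]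
  nlinarith [Set.mem_Ioi.1 hs]

lemma IsSymbol.exists_bound {η : V3 → ℂ} (hη : IsSymbol η) :
    ∃ C : ℝ, 0 ≤ C ∧ ∀ ξ, ‖η ξ‖ ≤ C := by
  obtain ⟨C, hC⟩ := (isCompact_closedBall (0 : V3) 2).exists_bound_of_continuousOn
    hη.1.continuous.continuousOn
  refine ⟨max C 0, le_max_right _ _, fun ξ => ?_⟩
  by_cases h : ‖ξ‖ ≤ 2
  · exact (hC ξ (by simpa using h)).trans (le_max_left _ _)
  · rw [hη.2 ξ (by linarith)]; simp

lemma hasLineDerivAt_fwdDiff_iter (h v : V3) (m : ℕ) :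
    ∀ η η' : V3 → ℂ, (∀ ξ, HasLineDerivAt ℝ η (η' ξ) ξ v) →
      ∀ ξ, HasLineDerivAt ℝ ((fwdDiff h)^[m] η) ((fwdDiff h)^[m] η' ξ) ξ v := by
  induction m with
  | zero => intro η η' hd ξ; exact hd ξ
  | succ m ih =>
    intro η η' hd ξ
    rw [Function.iterate_succ, Function.comp_apply, Function.comp_apply]
    refine ih _ _ (fun ζ => ?_) ξ
    have h1 := hd (ζ + h)
    have h2 := hd ζ
    unfold HasLineDerivAt at *
    unfold fwdDiff
    simp only [add_right_comm _ h] at h1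
    exact h1.sub h2

/-- Iterated differences of a symbol are controlled by powers of the step. -/
lemma exists_norm_fwdDiff_iter_le (m : ℕ) : ∀ η : V3 → ℂ, IsSymbol η → ∀ j : Fin 3,
    ∃ C : ℝ, 0 ≤ C ∧ ∀ (t : ℝ) (ξ : V3), ‖(fwdDiff (t • e3 j))^[m] η ξ‖ ≤ C * |t| ^ m := by
  induction m with
  | zero =>
    intro η hη j
    obtain ⟨C, hC0, hC⟩ := hη.exists_bound
    exact ⟨C, hC0, fun t ξ => by simpa using hC ξ⟩
  | succ m ih =>
    intro η hη j
    obtain ⟨C, hC0, hC⟩ := ih _ (hη.fderiv_apply (e3 j)) j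
    refine ⟨C, hC0, fun t ξ => ?_⟩
    have hd : ∀ ξ, HasLineDerivAt ℝ η (fderiv ℝ η ξ (e3 j)) ξ (e3 j) := fun ξ =>
      ((hη.1.differentiable (by simp)) ξ).hasFDerivAt.hasLineDerivAt _
    have hF := hasLineDerivAt_fwdDiff_iter (t • e3 j) (e3 j) m _ _ hd
    rw [Function.iterate_succ', Function.comp_apply]
    set F := (fwdDiff (t • e3 j))^[m] η with hFdef
    have hder : ∀ s : ℝ, HasDerivAt (fun s : ℝ => F (ξ + s • e3 j))
        ((fwdDiff (t • e3 j))^[m] (fun ξ => fderiv ℝ η ξ (e3 j)) (ξ + s • e3 j)) s := by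
      intro s
      have h1 := hF (ξ + s • e3 j)
      unfold HasLineDerivAt at h1
      have h2 : HasDerivAt (fun u : ℝ => u - s) 1 s := (hasDerivAt_id s).sub_const s
      have h3 : HasDerivAt (fun u : ℝ => F (ξ + s • e3 j + u • e3 j))
          ((fwdDiff (t • e3 j))^[m] (fun ξ => fderiv ℝ η ξ (e3 j)) (ξ + s • e3 j)) (s - s) := by
        simpa using h1
      have h4 := HasDerivAt.scomp (h := fun u : ℝ => u - s) s h3 h2
      simp only [one_smul] at h4
      refine h4.congr_of_eventuallyEq (Filter.Eventually.of_forall fun u => ?_)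
      simp only [Function.comp_apply, add_assoc, ← add_smul, add_sub_cancel]
    have := Convex.norm_image_sub_le_of_norm_hasDerivWithin_le
      (f := fun s : ℝ => F (ξ + s • e3 j)) (s := Set.univ) (x := 0) (y := t)
      (fun s _ => (hder s).hasDerivWithinAt) (fun s _ => hC t _) convex_univ
      (Set.mem_univ _) (Set.mem_univ _)
    simp only [zero_smul, add_zero, sub_zero, Real.norm_eq_abs] at this
    rw [fwdDiff, pow_succ, ← mul_assoc]
    exact this

/-- The character `x ↦ exp (i k · x)`. -/
def chr (k : Fin 3 → ℤ) (x : V3) : ℂ :=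
  Complex.exp (Complex.I * ((∑ i, (k i : ℝ) * x i : ℝ) : ℂ))

lemma norm_chr (k : Fin 3 → ℤ) (x : V3) : ‖chr k x‖ = 1 := by
  unfold chr; rw [mul_comm]; exact Complex.norm_exp_ofReal_mul_I _

lemma chr_add_single (k : Fin 3 → ℤ) (j : Fin 3) (x : V3) :
    chr (k + Pi.single j 1) x = Complex.exp (Complex.I * (x j : ℂ)) * chr k x := by
  unfold chr
  rw [← Complex.exp_add, ← mul_add]
  congr 2
  rw [← Complex.ofReal_add]
  congr 1
  simp only [Pi.add_apply, Int.cast_add, add_mul, Finset.sum_add_distrib]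
  rw [add_comm]
  congr 1
  rw [Finset.sum_eq_single j] <;> simp +contextual

lemma chr_sub (k : Fin 3 → ℤ) (x y : V3) :
    chr k (x - y) = chr k x * Complex.exp (-(Complex.I * ((∑ i, (k i : ℝ) * y i : ℝ) : ℂ))) := by
  unfold chr
  rw [← Complex.exp_add, ← mul_neg, ← mul_add]
  congr 2
  rw [← Complex.ofReal_neg, ← Complex.ofReal_add]
  congr 1
  simp only [Pi.sub_apply, mul_sub, Finset.sum_sub_distrib]
  ring

/-- The rescaled lattice point `k / R`. -/
def latt (R : ℝ) (k : Fin 3 → ℤ) : V3 := fun i => (k i : ℝ) / R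

/-- The lattice points of the cube `[-n, n]³`. -/
def cube (n : ℕ) : Finset (Fin 3 → ℤ) :=
  Fintype.piFinset fun _ => Finset.Icc (-(n : ℤ)) n

lemma card_cube (n : ℕ) : (cube n).card = (2 * n + 1) ^ 3 := by
  unfold cube
  rw [Fintype.card_piFinset]
  simp
  omega

lemma le_norm_latt {R ρ : ℝ} (hR : 0 < R) {k : Fin 3 → ℤ} (hk : k ∉ cube ⌊ρ * R⌋₊) :
    ρ ≤ ‖latt R k‖ := by
  unfold cube at hk
  rw [Fintype.mem_piFinset] at hk
  push Not at hk
  obtain ⟨i, hi⟩ := hk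
  rw [Finset.mem_Icc] at hi
  have h1 : (⌊ρ * R⌋₊ : ℤ) + 1 ≤ |k i| := by
    by_contra hcon
    apply hi
    rw [← abs_le]
    omega
  have h2 : ((⌊ρ * R⌋₊ : ℝ)) + 1 ≤ |(k i : ℝ)| := by exact_mod_cast h1
  have h3 := Nat.lt_floor_add_one (ρ * R)
  refine le_trans ?_ (norm_le_pi_norm (latt R k) i)
  rw [latt, Real.norm_eq_abs, abs_div, abs_of_pos hR, le_div_iff₀ hR]
  linarith

/-- The convolution kernel of the Fourier multiplier with symbol `η(·/R)`. -/
def symbolKernel (η : V3 → ℂ) (R : ℝ) (z : V3) : ℂ :=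
  ∑' k : Fin 3 → ℤ, η (latt R k) * chr k z

lemma symbolKernel_eq_sum {η : V3 → ℂ} {R ρ : ℝ} (hR : 0 < R)
    (hη : ∀ ξ : V3, ρ ≤ ‖ξ‖ → η ξ = 0) (z : V3) :
    symbolKernel η R z = ∑ k ∈ cube ⌊ρ * R⌋₊, η (latt R k) * chr k z :=
  tsum_eq_sum fun k hk => by rw [hη _ (le_norm_latt hR hk), zero_mul]

lemma norm_symbolKernel_le {η : V3 → ℂ} {R ρ B : ℝ} (hR : 0 < R) (hρ : 0 ≤ ρ)
    (hη : ∀ ξ : V3, ρ ≤ ‖ξ‖ → η ξ = 0) (hB : ∀ ξ, ‖η ξ‖ ≤ B) (z : V3) :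
    ‖symbolKernel η R z‖ ≤ (2 * (ρ * R) + 1) ^ 3 * B := by
  have hB0 : 0 ≤ B := (norm_nonneg _).trans (hB 0)
  rw [symbolKernel_eq_sum hR hη]
  refine (norm_sum_le_of_le (n := fun _ => B) _ fun k _ => ?_).trans ?_
  · rw [norm_mul, norm_chr, mul_one]; exact hB _
  · rw [Finset.sum_const, card_cube, nsmul_eq_mul]
    push_cast
    gcongr
    exact Nat.floor_le (by positivity)

lemma exp_sub_one_mul_symbolKernel {η : V3 → ℂ} {R ρ : ℝ} (hR : 0 < R)
    (hη : ∀ ξ : V3, ρ ≤ ‖ξ‖ → η ξ = 0) (j : Fin 3) (z : V3) :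
    (Complex.exp (Complex.I * (z j : ℂ)) - 1) * symbolKernel η R z =
      symbolKernel (fwdDiff ((-R⁻¹) • e3 j) η) R z := by
  have hsum : Summable fun k : Fin 3 → ℤ => η (latt R k) * chr k z :=
    summable_of_ne_finset_zero (s := cube ⌊ρ * R⌋₊)
      fun k hk => by rw [hη _ (le_norm_latt hR hk), zero_mul]
  let e : (Fin 3 → ℤ) ≃ (Fin 3 → ℤ) := Equiv.addRight (Pi.single j 1)
  set g : (Fin 3 → ℤ) → ℂ := fun k => η (latt R k + (-R⁻¹) • e3 j) * chr k z with hg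
  have hge : ∀ k, g (e k) = Complex.exp (Complex.I * (z j : ℂ)) * (η (latt R k) * chr k z) := by
    intro k
    have : latt R (k + Pi.single j 1) + (-R⁻¹) • e3 j = latt R k := by
      funext i
      simp only [latt, e3, Pi.add_apply, Pi.smul_apply, smul_eq_mul]
      by_cases hij : i = j
      · subst hij; simp; field_simp; ring
      · simp [hij]
    simp only [hg, e, Equiv.coe_addRight, this, chr_add_single]
    ring
  have hsg : Summable g := by
    rw [← e.summable_iff]
    exact (hsum.mul_left _).congr fun k => (hge k).symm
  have h1 : ∑' k, g k = Complex.exp (Complex.I * (z j : ℂ)) * symbolKernel η R z := by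
    rw [← e.tsum_eq, symbolKernel, ← tsum_mul_left]
    exact tsum_congr hge
  rw [sub_mul, ← h1, one_mul]
  unfold symbolKernel fwdDiff
  rw [← hsg.tsum_sub hsum]
  exact tsum_congr fun k => by simp only [hg, sub_mul]

lemma fwdDiff_iter_eq_zero {h : V3} (hh : ‖h‖ ≤ 1) {ρ : ℝ} (m : ℕ) : ∀ {η : V3 → ℂ},
    (∀ ξ : V3, ρ ≤ ‖ξ‖ → η ξ = 0) →
      ∀ ξ : V3, ρ + m ≤ ‖ξ‖ → (fwdDiff h)^[m] η ξ = 0 := by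
  induction m with
  | zero => intro η hη ξ hξ; exact hη ξ (by simpa using hξ)
  | succ m ih =>
    intro η hη ξ hξ
    push_cast at hξ
    rw [Function.iterate_succ', Function.comp_apply, fwdDiff, ih hη, ih hη, sub_zero]
    · linarith
    · have := norm_sub_norm_le ξ (-h)
      rw [norm_neg, sub_neg_eq_add] at this
      linarith

lemma exp_sub_one_pow_mul_symbolKernel {η : V3 → ℂ} {R ρ : ℝ} (hR : 1 ≤ R)
    (hη : ∀ ξ : V3, ρ ≤ ‖ξ‖ → η ξ = 0) (j : Fin 3) (z : V3) (m : ℕ) :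
    (Complex.exp (Complex.I * (z j : ℂ)) - 1) ^ m * symbolKernel η R z =
      symbolKernel ((fwdDiff ((-R⁻¹) • e3 j))^[m] η) R z := by
  have hR0 : 0 < R := by linarith
  have hh : ‖(-R⁻¹) • e3 j‖ ≤ 1 := by
    rw [norm_smul, norm_e3, mul_one, norm_neg, Real.norm_eq_abs, abs_of_pos (by positivity)]
    exact inv_le_one_of_one_le₀ hR
  induction m with
  | zero => simp
  | succ m ih =>
    rw [pow_succ', mul_assoc, ih, exp_sub_one_mul_symbolKernel hR0 (fwdDiff_iter_eq_zero hh m hη),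
      Function.iterate_succ', Function.comp_apply]

/-- The chordal distance on the torus. -/
def chord (z : V3) : ℝ := ‖fun j => 2 * Real.sin (z j / 2)‖

lemma chord_nonneg (z : V3) : 0 ≤ chord z := norm_nonneg _

/-- Pointwise decay of the kernel of a Fourier multiplier. -/
lemma exists_chord_pow_mul_symbolKernel_le {η : V3 → ℂ} (hη : IsSymbol η) (m : ℕ) :
    ∃ C : ℝ, 0 ≤ C ∧ ∀ R : ℝ, 1 ≤ R → ∀ z : V3,
      (R * chord z) ^ m * ‖symbolKernel η R z‖ ≤ C * R ^ 3 := by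
  choose C hC0 hC using fun j => exists_norm_fwdDiff_iter_le m η hη j
  refine ⟨(2 * (2 + m) + 1) ^ 3 * ∑ j, C j,
    mul_nonneg (by positivity) (Finset.sum_nonneg fun j _ => hC0 j), fun R hR z => ?_⟩
  have hR0 : 0 < R := by linarith
  obtain ⟨j, hj⟩ : ∃ j, chord z = ‖Complex.exp (Complex.I * (z j : ℂ)) - 1‖ := by
    obtain ⟨j, -, hj⟩ := Finset.exists_mem_eq_sup' (Finset.univ_nonempty (α := Fin 3))
      (fun j => ‖2 * Real.sin (z j / 2)‖₊)
    refine ⟨j, ?_⟩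
    rw [Complex.norm_exp_I_mul_ofReal_sub_one, chord, Pi.norm_def, ← Finset.sup'_eq_sup
      Finset.univ_nonempty, hj]
    rfl
  have hh : ‖(-R⁻¹) • e3 j‖ ≤ 1 := by
    rw [norm_smul, norm_e3, mul_one, norm_neg, Real.norm_eq_abs, abs_of_pos (by positivity)]
    exact inv_le_one_of_one_le₀ hR
  have h1 := norm_symbolKernel_le (η := (fwdDiff ((-R⁻¹) • e3 j))^[m] η) (ρ := 2 + m)
    (B := C j * |(-R⁻¹)| ^ m) hR0 (by positivity) (fwdDiff_iter_eq_zero hh m hη.2)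
    (hC j (-R⁻¹)) z
  rw [← exp_sub_one_pow_mul_symbolKernel hR hη.2, norm_mul, norm_pow, ← hj, abs_neg,
    abs_of_pos (by positivity : 0 < R⁻¹)] at h1
  calc (R * chord z) ^ m * ‖symbolKernel η R z‖
      = R ^ m * (chord z ^ m * ‖symbolKernel η R z‖) := by rw [mul_pow]; ring
    _ ≤ R ^ m * ((2 * ((2 + m) * R) + 1) ^ 3 * (C j * R⁻¹ ^ m)) := by gcongr
    _ = (2 * ((2 + m) * R) + 1) ^ 3 * C j := by
        rw [inv_pow]; field_simp
    _ ≤ ((2 * (2 + m) + 1) * R) ^ 3 * ∑ j, C j := by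
        gcongr
        · exact hC0 j
        · nlinarith
        · exact Finset.single_le_sum (f := C) (fun j _ => hC0 j) (Finset.mem_univ j)
    _ = _ := by ring

/-- The Fourier multiplier with symbol `η(·/R)` acting on periodic functions. -/
def symbolOp (η : V3 → ℂ) (R : ℝ) (g : V3 → ℝ) (x : V3) : ℂ :=
  ∑' k : Fin 3 → ℤ, η (latt R k) * fcoef g k * chr k x

lemma isCompact_T3 : IsCompact T3 := isCompact_Icc

lemma T3_eq_pi : T3 = Set.pi Set.univ fun _ : Fin 3 => Set.Icc (-Real.pi) Real.pi := by
  rw [Set.pi_univ_Icc]; rfl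

lemma continuous_chr (k : Fin 3 → ℤ) : Continuous (chr k) := by
  unfold chr; fun_prop

lemma symbolOp_eq_sum {η : V3 → ℂ} {R : ℝ} (hR : 0 < R) (hη : IsSymbol η) (g : V3 → ℝ) (x : V3) :
    symbolOp η R g x = ∑ k ∈ cube ⌊2 * R⌋₊, η (latt R k) * fcoef g k * chr k x :=
  tsum_eq_sum fun k hk => by rw [hη.2 _ (le_norm_latt hR hk), zero_mul, zero_mul]

lemma symbolOp_eq_integral {η : V3 → ℂ} {R : ℝ} (hR : 0 < R) (hη : IsSymbol η) {g : V3 → ℝ}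
    (hg : Continuous g) (x : V3) :
    symbolOp η R g x = (((2 * Real.pi) ^ (3 : ℕ))⁻¹ : ℝ) •
      ∫ y in T3, (g y : ℂ) * symbolKernel η R (x - y) := by
  have hc : ∀ k : Fin 3 → ℤ, Continuous fun y : V3 => (g y : ℂ) * (η (latt R k) * chr k (x - y)) :=
    fun k => (Complex.continuous_ofReal.comp hg).mul
      (continuous_const.mul ((continuous_chr k).comp (continuous_const.sub continuous_id)))
  simp_rw [symbolKernel_eq_sum hR hη.2, Finset.mul_sum]
  rw [integral_finsetSum _ fun k _ => (hc k).continuousOn.integrableOn_compact isCompact_T3,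
    symbolOp_eq_sum hR hη, Finset.smul_sum]
  refine Finset.sum_congr rfl fun k _ => ?_
  rw [fcoef, mul_smul_comm, smul_mul_assoc]
  congr 1
  rw [mul_right_comm, ← integral_const_mul]
  refine integral_congr_ae (Filter.Eventually.of_forall fun y => ?_)
  simp only [chr_sub]
  ring

/-- The one-dimensional majorant of the multiplier kernels. -/
def kernelWeight (R s : ℝ) : ℝ := R / (1 + (R * (2 * Real.sin (s / 2))) ^ 2)

lemma continuous_kernelWeight (R : ℝ) : Continuous (kernelWeight R) := by
  unfold kernelWeight
  exact continuous_const.div (by fun_prop) fun s => by positivity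

lemma kernelWeight_periodic (R : ℝ) : Function.Periodic (kernelWeight R) (2 * Real.pi) := by
  intro s
  unfold kernelWeight
  rw [show (s + 2 * Real.pi) / 2 = s / 2 + Real.pi by ring, Real.sin_add_pi]
  ring_nf

lemma mul_abs_le_abs_two_mul_sin_half {s : ℝ} (hs : |s| ≤ Real.pi) :
    2 / Real.pi * |s| ≤ |2 * Real.sin (s / 2)| := by
  have h := Real.mul_abs_le_abs_sin (x := s / 2)
    (by rw [abs_div, abs_two]; linarith)
  rw [abs_div, abs_two] at h
  rw [abs_mul, abs_two]
  linarith

lemma integral_kernelWeight_le {R : ℝ} (hR : 0 < R) (x : ℝ) :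
    ∫ y in Set.Icc (-Real.pi) Real.pi, kernelWeight R (x - y) ≤ Real.pi ^ 2 / 2 := by
  have hpi := Real.pi_pos
  rw [integral_Icc_eq_integral_Ioc,
    ← intervalIntegral.integral_of_le (by linarith : -Real.pi ≤ Real.pi),
    intervalIntegral.integral_comp_sub_left (fun s => kernelWeight R s)]
  have hper := (kernelWeight_periodic R).intervalIntegral_add_eq (x - Real.pi) (-Real.pi)
  rw [show x - Real.pi + 2 * Real.pi = x - -Real.pi by ring,
    show -Real.pi + 2 * Real.pi = Real.pi by ring] at hper
  rw [hper]
  have hc : R * (2 / Real.pi) ≠ 0 := by positivity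
  have hle : ∀ s ∈ Set.Icc (-Real.pi) Real.pi,
      kernelWeight R s ≤ R * (1 + (R * (2 / Real.pi) * s) ^ 2)⁻¹ := by
    intro s hs
    have h1 := mul_abs_le_abs_two_mul_sin_half (abs_le.2 hs)
    have h2 : (2 / Real.pi * s) ^ 2 ≤ (2 * Real.sin (s / 2)) ^ 2 := by
      rw [sq_le_sq, abs_mul, abs_of_pos (by positivity : 0 < 2 / Real.pi)]
      exact h1
    unfold kernelWeight
    rw [div_eq_mul_inv]
    gcongr R * (1 + ?_)⁻¹
    rw [mul_assoc, mul_pow, mul_pow R]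
    gcongr
  have hcont : Continuous fun s : ℝ => R * (1 + (R * (2 / Real.pi) * s) ^ 2)⁻¹ :=
    continuous_const.mul (Continuous.inv₀ (by fun_prop) fun s => by positivity)
  refine (intervalIntegral.integral_mono_on (by linarith)
    ((continuous_kernelWeight R).intervalIntegrable _ _) (hcont.intervalIntegrable _ _) hle).trans ?_
  rw [intervalIntegral.integral_const_mul,
    intervalIntegral.integral_comp_mul_left (fun s => (1 + s ^ 2)⁻¹) hc, integral_inv_one_add_sq]
  have h1 := Real.arctan_lt_pi_div_two (R * (2 / Real.pi) * Real.pi)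
  have h2 := Real.neg_pi_div_two_lt_arctan (R * (2 / Real.pi) * -Real.pi)
  rw [smul_eq_mul, ← mul_assoc, show R * (R * (2 / Real.pi))⁻¹ = Real.pi / 2 by field_simp]
  nlinarith

lemma integral_prod_kernelWeight_le {R : ℝ} (hR : 0 < R) (x : V3) :
    ∫ y in T3, ∏ j, kernelWeight R (x j - y j) ≤ (Real.pi ^ 2 / 2) ^ 3 := by
  rw [T3_eq_pi, volume_pi, Measure.restrict_pi_pi,
    integral_fintype_prod_eq_prod (𝕜 := ℝ) (fun j s => kernelWeight R (x j - s))]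
  refine (Finset.prod_le_prod (g := fun _ => Real.pi ^ 2 / 2) (fun j _ => ?_)
    fun j _ => integral_kernelWeight_le hR (x j)).trans ?_
  · refine integral_nonneg fun s => ?_
    unfold kernelWeight
    positivity
  · rw [Finset.prod_const, Finset.card_univ, Fintype.card_fin]

lemma abs_two_mul_sin_half_le_chord (z : V3) (j : Fin 3) : |2 * Real.sin (z j / 2)| ≤ chord z :=
  norm_le_pi_norm (fun j => 2 * Real.sin (z j / 2)) j

lemma one_add_sq_cube_mul_pow_le {u : ℝ} (hu : 0 ≤ u) {p : ℕ} (hp : p ≤ 2) :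
    (1 + u ^ 2) ^ 3 * u ^ p ≤ 8 * (1 + u ^ 8) := by
  rcases le_total u 1 with h | h
  · have h1 : u ^ p ≤ 1 := pow_le_one₀ hu h
    have h2 : u ^ 2 ≤ 1 := pow_le_one₀ hu h
    calc (1 + u ^ 2) ^ 3 * u ^ p ≤ (1 + 1) ^ 3 * 1 := by gcongr
      _ ≤ 8 * (1 + u ^ 8) := by nlinarith [pow_nonneg hu 8]
  · have h1 : u ^ p ≤ u ^ 2 := pow_le_pow_right₀ h hp
    have h2 : 1 ≤ u ^ 2 := one_le_pow₀ h
    calc (1 + u ^ 2) ^ 3 * u ^ p ≤ (u ^ 2 + u ^ 2) ^ 3 * u ^ 2 := by gcongr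
      _ ≤ 8 * (1 + u ^ 8) := by ring_nf; linarith

lemma exists_chord_pow_mul_symbolKernel_le_prod {η : V3 → ℂ} (hη : IsSymbol η) :
    ∃ C : ℝ, 0 ≤ C ∧ ∀ R : ℝ, 1 ≤ R → ∀ p : ℕ, p ≤ 2 → ∀ z : V3,
      (R * chord z) ^ p * ‖symbolKernel η R z‖ ≤ C * ∏ j, kernelWeight R (z j) := by
  obtain ⟨C, hC0, hC⟩ := exists_chord_pow_mul_symbolKernel_le hη 0
  obtain ⟨D, hD0, hD⟩ := exists_chord_pow_mul_symbolKernel_le hη 8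
  refine ⟨8 * (C + D), by positivity, fun R hR p hp z => ?_⟩
  have hR0 : 0 < R := by linarith
  have h1 := hC R hR z
  have h2 := hD R hR z
  rw [pow_zero, one_mul] at h1
  set u := R * chord z with hu
  have hu0 : 0 ≤ u := mul_nonneg hR0.le (chord_nonneg z)
  have h3 := one_add_sq_cube_mul_pow_le hu0 hp
  have hprod : ∏ j, (1 + (R * (2 * Real.sin (z j / 2))) ^ 2) ≤ (1 + u ^ 2) ^ 3 := by
    refine (Finset.prod_le_prod (g := fun _ => 1 + u ^ 2) (fun j _ => by positivity)
      fun j _ => ?_).trans (by simp)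
    gcongr 1 + ?_
    rw [sq_le_sq, abs_mul, abs_of_pos hR0, abs_of_nonneg hu0]
    exact mul_le_mul_of_nonneg_left (abs_two_mul_sin_half_le_chord z j) hR0.le
  have hpos : 0 < ∏ j, (1 + (R * (2 * Real.sin (z j / 2))) ^ 2) :=
    Finset.prod_pos fun j _ => by positivity
  have hw : ∏ j, kernelWeight R (z j) =
      R ^ 3 / ∏ j, (1 + (R * (2 * Real.sin (z j / 2))) ^ 2) := by
    unfold kernelWeight
    rw [Finset.prod_div_distrib]
    simp
  rw [hw, ← mul_div_assoc, le_div_iff₀ hpos]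
  calc u ^ p * ‖symbolKernel η R z‖ * ∏ j, (1 + (R * (2 * Real.sin (z j / 2))) ^ 2)
      ≤ u ^ p * ‖symbolKernel η R z‖ * (1 + u ^ 2) ^ 3 := by gcongr
    _ = ((1 + u ^ 2) ^ 3 * u ^ p) * ‖symbolKernel η R z‖ := by ring
    _ ≤ (8 * (1 + u ^ 8)) * ‖symbolKernel η R z‖ := by gcongr
    _ = 8 * (‖symbolKernel η R z‖ + u ^ 8 * ‖symbolKernel η R z‖) := by ring
    _ ≤ 8 * (C * R ^ 3 + D * R ^ 3) := by gcongr
    _ = _ := by ring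

/-- A multiplier applied to a function vanishing to order `p` at `x` gains `R ^ (-p)` at `x`. -/
lemma exists_norm_symbolOp_le {η : V3 → ℂ} (hη : IsSymbol η) :
    ∃ C : ℝ, 0 ≤ C ∧ ∀ R : ℝ, 1 ≤ R → ∀ p : ℕ, p ≤ 2 → ∀ g : V3 → ℝ, Continuous g →
      ∀ (A : ℝ) (x : V3), 0 ≤ A → (∀ y, |g y| ≤ A * chord (x - y) ^ p) →
        R ^ p * ‖symbolOp η R g x‖ ≤ C * A := by
  obtain ⟨C, hC0, hC⟩ := exists_chord_pow_mul_symbolKernel_le_prod hη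
  have hpi := Real.pi_pos
  refine ⟨((2 * Real.pi) ^ (3 : ℕ))⁻¹ * (C * (Real.pi ^ 2 / 2) ^ 3), by positivity,
    fun R hR p hp g hg A x hA hgA => ?_⟩
  have hR0 : 0 < R := by linarith
  rw [symbolOp_eq_integral hR0 hη hg, norm_smul, Real.norm_of_nonneg (by positivity)]
  have hle : ‖∫ y in T3, (g y : ℂ) * symbolKernel η R (x - y)‖ * R ^ p ≤
      ∫ y in T3, A * C * ∏ j, kernelWeight R (x j - y j) := by
    rw [← Real.norm_of_nonneg (by positivity : 0 ≤ R ^ p), ← Complex.norm_real, ← norm_mul,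
      ← integral_mul_const]
    refine norm_integral_le_of_norm_le ?_ (Filter.Eventually.of_forall fun y => ?_)
    · refine Continuous.integrableOn_Icc ?_
      refine continuous_const.mul (continuous_finsetProd _ fun j _ => ?_)
      exact (continuous_kernelWeight R).comp (by fun_prop)
    · have h1 := hC R hR p hp (x - y)
      rw [norm_mul, norm_mul, Complex.norm_real, Complex.norm_real, Real.norm_eq_abs,
        Real.norm_of_nonneg (by positivity : 0 ≤ R ^ p)]
      calc |g y| * ‖symbolKernel η R (x - y)‖ * R ^ p
          ≤ A * chord (x - y) ^ p * ‖symbolKernel η R (x - y)‖ * R ^ p := by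
            gcongr; exact hgA y
        _ = A * ((R * chord (x - y)) ^ p * ‖symbolKernel η R (x - y)‖) := by
            rw [mul_pow]; ring
        _ ≤ A * (C * ∏ j, kernelWeight R ((x - y) j)) := by gcongr
        _ = _ := by simp only [Pi.sub_apply]; ring
  rw [integral_const_mul] at hle
  have h2 : A * C * ∫ y in T3, ∏ j, kernelWeight R (x j - y j) ≤
      A * C * (Real.pi ^ 2 / 2) ^ 3 := by
    gcongr; exact integral_prod_kernelWeight_le hR0 x
  calc R ^ p * (((2 * Real.pi) ^ (3 : ℕ))⁻¹ * ‖∫ y in T3, (g y : ℂ) * symbolKernel η R (x - y)‖)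
      = ((2 * Real.pi) ^ (3 : ℕ))⁻¹ *
          (‖∫ y in T3, (g y : ℂ) * symbolKernel η R (x - y)‖ * R ^ p) := by ring
    _ ≤ ((2 * Real.pi) ^ (3 : ℕ))⁻¹ * (A * C * (Real.pi ^ 2 / 2) ^ 3) := by
        exact mul_le_mul_of_nonneg_left (hle.trans h2) (by positivity)
    _ = _ := by ring

section Derivatives

variable {E : Type*} [NormedAddCommGroup E] [NormedSpace ℝ E]

lemma norm_iteratedFDeriv_fderiv_apply_le {F : V3 → E} (hF : ContDiff ℝ (⊤ : ℕ∞) F) (j : Fin 3)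
    (n : ℕ) (x : V3) :
    ‖iteratedFDeriv ℝ n (fun y => fderiv ℝ F y (e3 j)) x‖ ≤ ‖iteratedFDeriv ℝ (n + 1) F x‖ := by
  have hF' : ContDiff ℝ (⊤ : ℕ∞) (fderiv ℝ F) := hF.fderiv_right (by simp)
  refine (norm_iteratedFDeriv_clm_apply_const hF'.contDiffAt
    (by exact_mod_cast le_top)).trans ?_
  rw [norm_e3, one_mul, norm_iteratedFDeriv_fderiv]

lemma norm_iteratedFDeriv_sum_le {ι : Type*} (s : Finset ι) {F : ι → V3 → E}
    (hF : ∀ i ∈ s, ContDiff ℝ (⊤ : ℕ∞) (F i)) (n : ℕ) (x : V3) :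
    ‖iteratedFDeriv ℝ n (fun y => ∑ i ∈ s, F i y) x‖ ≤ ∑ i ∈ s, ‖iteratedFDeriv ℝ n (F i) x‖ := by
  rw [iteratedFDeriv_fun_sum_apply fun i hi =>
    ((hF i hi).of_le (by exact_mod_cast le_top)).contDiffAt]
  exact norm_sum_le _ _

/-- The derivative of order `n + 1` is controlled by those of order `n` of the partials. -/
lemma norm_iteratedFDeriv_succ_le {F : V3 → E} (hF : ContDiff ℝ (⊤ : ℕ∞) F) (n : ℕ) (x : V3) :
    ‖iteratedFDeriv ℝ (n + 1) F x‖ ≤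
      ∑ j, ‖iteratedFDeriv ℝ n (fun y => fderiv ℝ F y (e3 j)) x‖ := by
  have hF' : ContDiff ℝ (⊤ : ℕ∞) (fderiv ℝ F) := hF.fderiv_right (by simp)
  let P : Fin 3 → (V3 →L[ℝ] ℝ) := fun j => ContinuousLinearMap.proj j
  let L : Fin 3 → (E →L[ℝ] (V3 →L[ℝ] E)) := fun j => ContinuousLinearMap.smulRightL ℝ V3 E (P j)
  have hL : ∀ j, ‖L j‖ ≤ 1 := by
    intro j
    refine ContinuousLinearMap.opNorm_le_bound _ zero_le_one fun c => ?_
    refine ContinuousLinearMap.opNorm_le_bound _ (by positivity) fun v => ?_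
    rw [one_mul, mul_comm]
    change ‖v j • c‖ ≤ _
    rw [norm_smul]
    gcongr
    exact norm_le_pi_norm v j
  have hpart : ∀ j, ContDiff ℝ (⊤ : ℕ∞) (fun y => fderiv ℝ F y (e3 j)) := fun j =>
    hF'.clm_apply contDiff_const
  have hdecomp : fderiv ℝ F = fun y => ∑ j, (L j ∘ fun y => fderiv ℝ F y (e3 j)) y := by
    funext y
    ext v
    have hv : v = ∑ j, v j • e3 j := by
      funext i
      simp [e3, Finset.sum_apply, Pi.single_apply]
    conv_lhs => rw [hv]
    simp [L, P]
  rw [← norm_iteratedFDeriv_fderiv]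
  conv_lhs => rw [hdecomp]
  refine (norm_iteratedFDeriv_sum_le _ (fun j _ => (L j).contDiff.comp (hpart j)) n x).trans
    (Finset.sum_le_sum fun j _ => ?_)
  refine ((L j).norm_iteratedFDeriv_comp_left (hpart j).contDiffAt
    (by exact_mod_cast le_top)).trans ?_
  exact mul_le_of_le_one_left (norm_nonneg _) (hL j)

end Derivatives

lemma contDiff_chr (k : Fin 3 → ℤ) : ContDiff ℝ (⊤ : ℕ∞) (chr k) := by
  have h : ContDiff ℝ (⊤ : ℕ∞) fun x : V3 => ∑ i, (k i : ℝ) * x i :=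
    ContDiff.sum fun i _ => contDiff_const.mul (contDiff_apply ℝ ℝ i)
  exact (contDiff_const.mul (Complex.ofRealCLM.contDiff.comp h)).cexp

lemma fderiv_chr_apply (k : Fin 3 → ℤ) (x : V3) (j : Fin 3) :
    fderiv ℝ (chr k) x (e3 j) = Complex.I * (k j : ℂ) * chr k x := by
  let ℓ : V3 →L[ℝ] ℝ := ∑ i, (k i : ℝ) • ContinuousLinearMap.proj (R := ℝ) (φ := fun _ => ℝ) i
  have hℓ : ∀ y : V3, ℓ y = ∑ i, (k i : ℝ) * y i := fun y => by
    simp [ℓ]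
  have h1 : HasFDerivAt (fun y : V3 => Complex.I * ((ℓ y : ℝ) : ℂ))
      (Complex.I • (Complex.ofRealCLM.comp ℓ)) x :=
    ((Complex.ofRealCLM.comp ℓ).hasFDerivAt).const_mul Complex.I
  have h2 := h1.cexp
  have h3 : chr k = fun y : V3 => Complex.exp (Complex.I * ((ℓ y : ℝ) : ℂ)) := by
    funext y; rw [hℓ]; rfl
  rw [h3, h2.fderiv]
  have h4 : ℓ (e3 j) = k j := by
    rw [hℓ, Finset.sum_eq_single j] <;> simp +contextual [e3]
  simp [h4]
  ring

lemma contDiff_symbolOp {η : V3 → ℂ} (hη : IsSymbol η) {R : ℝ} (hR : 0 < R) (g : V3 → ℝ) :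
    ContDiff ℝ (⊤ : ℕ∞) (symbolOp η R g) := by
  rw [show symbolOp η R g = fun x => ∑ k ∈ cube ⌊2 * R⌋₊, η (latt R k) * fcoef g k * chr k x from
    funext fun x => symbolOp_eq_sum hR hη g x]
  exact ContDiff.sum fun k _ => contDiff_const.mul (contDiff_chr k)

lemma fderiv_symbolOp_apply {η : V3 → ℂ} (hη : IsSymbol η) {R : ℝ} (hR : 0 < R) (g : V3 → ℝ)
    (j : Fin 3) (x : V3) :
    fderiv ℝ (symbolOp η R g) x (e3 j) =
      R • symbolOp (fun ξ => Complex.I * (ξ j : ℂ) * η ξ) R g x := by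
  rw [show symbolOp η R g = fun x => ∑ k ∈ cube ⌊2 * R⌋₊, η (latt R k) * fcoef g k * chr k x from
    funext fun x => symbolOp_eq_sum hR hη g x]
  have hd : ∀ k, DifferentiableAt ℝ (chr k) x := fun k =>
    ((contDiff_chr k).differentiable (by simp)) x
  rw [fderiv_fun_sum fun k _ => (hd k).const_mul _, sum_apply,
    symbolOp_eq_sum hR (hη.mul_coord j), Finset.smul_sum]
  refine Finset.sum_congr rfl fun k _ => ?_
  rw [fderiv_const_mul (hd k), smul_apply, fderiv_chr_apply]
  have : ((latt R k j : ℝ) : ℂ) * R = (k j : ℂ) := by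
    rw [latt, ← Complex.ofReal_mul, div_mul_cancel₀ _ hR.ne']
    simp
  rw [smul_eq_mul, Complex.real_smul, ← this]
  ring

/-- Derivatives of a multiplier applied to a function vanishing to order `p` at `x`. -/
lemma exists_norm_iteratedFDeriv_symbolOp_le (n : ℕ) : ∀ η : V3 → ℂ, IsSymbol η →
    ∃ C : ℝ, 0 ≤ C ∧ ∀ R : ℝ, 1 ≤ R → ∀ p : ℕ, p ≤ 2 → ∀ g : V3 → ℝ, Continuous g →
      ∀ (A : ℝ) (x : V3), 0 ≤ A → (∀ y, |g y| ≤ A * chord (x - y) ^ p) →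
        R ^ p * ‖iteratedFDeriv ℝ n (symbolOp η R g) x‖ ≤ C * A * R ^ n := by
  induction n with
  | zero =>
    intro η hη
    obtain ⟨C, hC0, hC⟩ := exists_norm_symbolOp_le hη
    refine ⟨C, hC0, fun R hR p hp g hg A x hA hgA => ?_⟩
    rw [norm_iteratedFDeriv_zero, pow_zero, mul_one]
    exact hC R hR p hp g hg A x hA hgA
  | succ n ih =>
    intro η hη
    choose C hC0 hC using fun j => ih _ (hη.mul_coord j)
    refine ⟨∑ j, C j, Finset.sum_nonneg fun j _ => hC0 j, fun R hR p hp g hg A x hA hgA => ?_⟩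
    have hR0 : 0 < R := by linarith
    have h1 := norm_iteratedFDeriv_succ_le (contDiff_symbolOp hη hR0 g) n x
    have h2 : ∀ j, ‖iteratedFDeriv ℝ n (fun y => fderiv ℝ (symbolOp η R g) y (e3 j)) x‖ =
        R * ‖iteratedFDeriv ℝ n (symbolOp (fun ξ => Complex.I * (ξ j : ℂ) * η ξ) R g) x‖ := by
      intro j
      have : (fun y => fderiv ℝ (symbolOp η R g) y (e3 j)) =
          R • symbolOp (fun ξ => Complex.I * (ξ j : ℂ) * η ξ) R g :=
        funext fun y => fderiv_symbolOp_apply hη hR0 g j y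
      rw [this, iteratedFDeriv_const_smul_apply
        ((contDiff_symbolOp (hη.mul_coord j) hR0 g).of_le (by exact_mod_cast le_top)).contDiffAt,
        norm_smul, Real.norm_of_nonneg hR0.le]
    simp only [h2] at h1
    calc R ^ p * ‖iteratedFDeriv ℝ (n + 1) (symbolOp η R g) x‖
        ≤ R ^ p * ∑ j, R *
          ‖iteratedFDeriv ℝ n (symbolOp (fun ξ => Complex.I * (ξ j : ℂ) * η ξ) R g) x‖ := by gcongr
      _ = ∑ j, R * (R ^ p *
          ‖iteratedFDeriv ℝ n (symbolOp (fun ξ => Complex.I * (ξ j : ℂ) * η ξ) R g) x‖) := by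
          rw [Finset.mul_sum]; exact Finset.sum_congr rfl fun j _ => by ring
      _ ≤ ∑ j, R * (C j * A * R ^ n) := by
          refine Finset.sum_le_sum fun j _ => mul_le_mul_of_nonneg_left ?_ hR0.le
          exact hC j R hR p hp g hg A x hA hgA
      _ = _ := by
          rw [Finset.sum_mul, Finset.sum_mul]
          exact Finset.sum_congr rfl fun j _ => by ring

lemma integral_exp_int_mul (m : ℤ) :
    ∫ s in Set.Icc (-Real.pi) Real.pi, Complex.exp (Complex.I * ((m : ℝ) * s : ℝ)) =
      if m = 0 then 2 * Real.pi else 0 := by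
  have hpi := Real.pi_pos
  rw [integral_Icc_eq_integral_Ioc,
    ← intervalIntegral.integral_of_le (by linarith : -Real.pi ≤ Real.pi)]
  split_ifs with h
  · subst h
    simp
    ring
  · have hc : Complex.I * (m : ℂ) ≠ 0 := mul_ne_zero Complex.I_ne_zero (by exact_mod_cast h)
    have := integral_exp_mul_complex (a := -Real.pi) (b := Real.pi) hc
    push_cast
    simp only [← mul_assoc]
    rw [this, div_eq_zero_iff]
    left
    rw [sub_eq_zero, Complex.exp_eq_exp_iff_exists_int]
    exact ⟨m, by push_cast; ring⟩

lemma integral_chr (n : Fin 3 → ℤ) :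
    ∫ y in T3, chr n y = if n = 0 then (2 * Real.pi : ℂ) ^ 3 else 0 := by
  have h1 : ∀ y : V3, chr n y = ∏ i, Complex.exp (Complex.I * ((n i : ℝ) * y i : ℝ)) := by
    intro y
    rw [chr, ← Complex.exp_sum, Complex.ofReal_sum, Finset.mul_sum]
  simp only [h1]
  rw [T3_eq_pi, volume_pi, Measure.restrict_pi_pi, integral_fintype_prod_eq_prod (𝕜 := ℂ)
    (fun i s => Complex.exp (Complex.I * ((n i : ℝ) * s : ℝ)))]
  simp only [integral_exp_int_mul]
  split_ifs with h
  · subst h; simp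
  · obtain ⟨i, hi⟩ := Function.ne_iff.1 h
    exact Finset.prod_eq_zero (Finset.mem_univ i) (by simpa using hi)

lemma chr_mul_exp_neg (n k : Fin 3 → ℤ) (y : V3) :
    chr n y * Complex.exp (-(Complex.I * ((∑ i, (k i : ℝ) * y i : ℝ) : ℂ))) = chr (n - k) y := by
  unfold chr
  rw [← Complex.exp_add, ← mul_neg, ← mul_add]
  congr 2
  rw [← Complex.ofReal_neg, ← Complex.ofReal_add]
  congr 1
  simp [sub_mul]
  ring

lemma conj_chr (n : Fin 3 → ℤ) (y : V3) : (starRingEnd ℂ) (chr n y) = chr (-n) y := by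
  unfold chr
  rw [← Complex.exp_conj, map_mul, Complex.conj_I, Complex.conj_ofReal, neg_mul, ← mul_neg,
    ← Complex.ofReal_neg]
  simp

lemma fcoef_re_chr (c : ℂ) (n k : Fin 3 → ℤ) :
    fcoef (fun y => (c * chr n y).re) k =
      ((if n = k then c else 0) + if -n = k then (starRingEnd ℂ) c else 0) / 2 := by
  have hpi := Real.pi_pos
  have h1 : ∀ y : V3, (((c * chr n y).re : ℝ) : ℂ) *
      Complex.exp (-(Complex.I * ((∑ i, (k i : ℝ) * y i : ℝ) : ℂ))) =
        c / 2 * chr (n - k) y + (starRingEnd ℂ) c / 2 * chr (-n - k) y := by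
    intro y
    rw [Complex.re_eq_add_conj, map_mul, conj_chr, ← chr_mul_exp_neg n k, ← chr_mul_exp_neg (-n) k]
    ring
  have hi : ∀ (d : ℂ) (l : Fin 3 → ℤ), IntegrableOn (fun y => d * chr l y) T3 := fun d l =>
    (continuous_const.mul (continuous_chr l)).continuousOn.integrableOn_compact isCompact_T3
  unfold fcoef
  simp only [h1]
  rw [integral_add (hi _ _) (hi _ _), integral_const_mul, integral_const_mul, integral_chr,
    integral_chr, Complex.real_smul]
  have hpc : (Real.pi : ℂ) ≠ 0 := by exact_mod_cast hpi.ne'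
  simp only [sub_eq_zero]
  push_cast
  split_ifs <;> field_simp <;> ring

/-- A multiplier acts on a real plane wave as the identity where its symbol equals one. -/
lemma symbolOp_re_chr {η : V3 → ℂ} {R : ℝ} {n : Fin 3 → ℤ}
    (h1 : η (latt R n) = 1) (h2 : η (latt R (-n)) = 1) (c : ℂ) (x : V3) :
    symbolOp η R (fun y => (c * chr n y).re) x = ((c * chr n x).re : ℝ) := by
  have hs : ∀ k, η (latt R k) * fcoef (fun y => (c * chr n y).re) k * chr k x =
      (if k = n then c / 2 * chr n x else 0) +
        if k = -n then (starRingEnd ℂ) c / 2 * chr (-n) x else 0 := by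
    intro k
    rw [fcoef_re_chr]
    by_cases hk : k = n <;> by_cases hk' : k = -n
    · rw [if_pos hk.symm, if_pos hk'.symm, if_pos hk, if_pos hk', ← hk', hk, h1]; ring
    · rw [if_pos hk.symm, if_neg (Ne.symm hk'), if_pos hk, if_neg hk', hk, h1]; ring
    · rw [if_neg (Ne.symm hk), if_pos hk'.symm, if_neg hk, if_pos hk', hk', h2]; ring
    · rw [if_neg (Ne.symm hk), if_neg (Ne.symm hk'), if_neg hk, if_neg hk']; ring
  unfold symbolOp
  rw [tsum_congr hs, Summable.tsum_add, tsum_ite_eq, tsum_ite_eq, Complex.re_eq_add_conj, map_mul,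
    conj_chr]
  · ring
  · exact (hasSum_ite_eq n _).summable
  · exact (hasSum_ite_eq (-n) _).summable

/-- The real part of a Fourier multiplier, as a linear operator on continuous functions. -/
def lowPass {η : V3 → ℂ} (hη : IsSymbol η) {R : ℝ} (hR : 0 < R) : C(V3, ℝ) →ₗ[ℝ] (V3 → ℝ) where
  toFun g x := (symbolOp η R g x).re
  map_add' g h := by
    have hi : ∀ (g : C(V3, ℝ)) (k : Fin 3 → ℤ), IntegrableOn (fun x : V3 => (g x : ℂ) *
        Complex.exp (-(Complex.I * ((∑ i, (k i : ℝ) * x i : ℝ) : ℂ)))) T3 := fun g k =>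
      ContinuousOn.integrableOn_compact isCompact_T3 (by fun_prop)
    have hk : ∀ k, fcoef (fun x => g x + h x) k = fcoef g k + fcoef h k := fun k => by
      simp only [fcoef, ← smul_add]
      rw [← integral_add (hi g k) (hi h k)]
      simp only [Complex.ofReal_add, add_mul]
    funext x
    change (symbolOp η R (fun x => g x + h x) x).re = _ + _
    simp only [symbolOp_eq_sum hR hη, hk, mul_add, add_mul, Finset.sum_add_distrib, Complex.add_re]
  map_smul' c g := by
    have hk : ∀ k, fcoef (fun x => c * g x) k = c * fcoef g k := fun k => by
      simp only [fcoef, Complex.ofReal_mul, mul_assoc]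
      rw [integral_const_mul, mul_smul_comm]
    funext x
    change (symbolOp η R (fun x => c * g x) x).re = c * (symbolOp η R g x).re
    simp only [symbolOp_eq_sum hR hη, hk]
    rw [← Complex.re_ofReal_mul, Finset.mul_sum]
    simp only [mul_assoc, mul_left_comm]

/-- Derivatives of `F` at `x` behave as if `F` oscillated at frequency `R`, with amplitude
`Λ ^ q / R ^ p`. -/
structure OrderAt (B : ℕ → ℝ) (Λ R : ℝ) (q p : ℕ) (F : V3 → ℝ) (x : V3) : Prop where
  contDiff : ContDiff ℝ (⊤ : ℕ∞) F
  nonneg : ∀ n, 0 ≤ B n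
  bound : ∀ n, R ^ p * ‖iteratedFDeriv ℝ n F x‖ ≤ B n * Λ ^ q * R ^ n

namespace OrderAt

variable {B B' : ℕ → ℝ} {Λ R : ℝ} {q q' p p' : ℕ} {F G : V3 → ℝ} {x : V3}

lemma add (hF : OrderAt B Λ R q p F x) (hG : OrderAt B' Λ R q p G x) (hR : 1 ≤ R) :
    OrderAt (fun n => B n + B' n) Λ R q p (fun y => F y + G y) x where
  contDiff := hF.contDiff.add hG.contDiff
  nonneg n := add_nonneg (hF.nonneg n) (hG.nonneg n)
  bound n := by
    have h : iteratedFDeriv ℝ n (fun y => F y + G y) x =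
        iteratedFDeriv ℝ n F x + iteratedFDeriv ℝ n G x :=
      iteratedFDeriv_add_apply (hF.contDiff.of_le (by exact_mod_cast le_top)).contDiffAt
        (hG.contDiff.of_le (by exact_mod_cast le_top)).contDiffAt
    have hR0 : 0 ≤ R ^ p := by positivity
    rw [h]
    calc _ ≤ R ^ p * (‖iteratedFDeriv ℝ n F x‖ + ‖iteratedFDeriv ℝ n G x‖) := by
          gcongr; exact norm_add_le _ _
      _ ≤ _ := by linarith [hF.bound n, hG.bound n]

lemma neg (hF : OrderAt B Λ R q p F x) : OrderAt B Λ R q p (fun y => - F y) x where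
  contDiff := hF.contDiff.neg
  nonneg := hF.nonneg
  bound n := by
    have h : iteratedFDeriv ℝ n (fun y => - F y) x = - iteratedFDeriv ℝ n F x :=
      iteratedFDeriv_neg_apply
    rw [h, norm_neg]
    exact hF.bound n

lemma sub (hF : OrderAt B Λ R q p F x) (hG : OrderAt B' Λ R q p G x) (hR : 1 ≤ R) :
    OrderAt (fun n => B n + B' n) Λ R q p (fun y => F y - G y) x := by
  simpa only [sub_eq_add_neg] using hF.add hG.neg hR

lemma mono (hF : OrderAt B Λ R q p F x) (hΛ : 1 ≤ Λ) (hR : 1 ≤ R) (hq : q ≤ q') :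
    OrderAt B Λ R q' p F x where
  contDiff := hF.contDiff
  nonneg := hF.nonneg
  bound n := (hF.bound n).trans <| by
    have := hF.nonneg n
    gcongr

lemma mul (hF : OrderAt B Λ R q p F x) (hG : OrderAt B' Λ R q' p' G x) (hΛ : 1 ≤ Λ) (hR : 1 ≤ R) :
    OrderAt (fun n => ∑ i ∈ Finset.range (n + 1), (n.choose i : ℝ) * B i * B' (n - i))
      Λ R (q + q') (p + p') (fun y => F y * G y) x where
  contDiff := hF.contDiff.mul hG.contDiff
  nonneg n := Finset.sum_nonneg fun i _ =>
    mul_nonneg (mul_nonneg (by positivity) (hF.nonneg i)) (hG.nonneg _)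
  bound n := by
    have h := norm_iteratedFDeriv_mul_le (𝕜 := ℝ) hF.contDiff hG.contDiff x
      (n := n) (by exact_mod_cast le_top)
    have hR0 : 0 ≤ R ^ (p + p') := by positivity
    refine (mul_le_mul_of_nonneg_left h hR0).trans ?_
    rw [Finset.mul_sum, Finset.sum_mul, Finset.sum_mul]
    refine Finset.sum_le_sum fun i hi => ?_
    have hin : i + (n - i) = n := by
      have := Finset.mem_range.mp hi
      omega
    calc R ^ (p + p') * ((n.choose i : ℝ) * ‖iteratedFDeriv ℝ i F x‖ *
          ‖iteratedFDeriv ℝ (n - i) G x‖)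
        = n.choose i * ((R ^ p * ‖iteratedFDeriv ℝ i F x‖) *
          (R ^ p' * ‖iteratedFDeriv ℝ (n - i) G x‖)) := by rw [pow_add]; ring
      _ ≤ n.choose i * ((B i * Λ ^ q * R ^ i) * (B' (n - i) * Λ ^ q' * R ^ (n - i))) := by
          have := hF.nonneg i
          have := hF.bound i
          have := hG.bound (n - i)
          gcongr
      _ = n.choose i * B i * B' (n - i) * Λ ^ (q + q') * R ^ (i + (n - i)) := by
          rw [pow_add, pow_add]; ring
      _ = _ := by rw [hin]

lemma const {c M : ℝ} (hc : |c| ≤ M) (hR : 1 ≤ R) :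
    OrderAt (fun _ => M) Λ R 0 0 (fun _ => c) x where
  contDiff := contDiff_const
  nonneg _ := (abs_nonneg c).trans hc
  bound n := by
    have hM := (abs_nonneg c).trans hc
    rw [pow_zero, pow_zero, one_mul, mul_one]
    rcases Nat.eq_zero_or_pos n with rfl | hn
    · simpa using hc
    · rw [iteratedFDeriv_const_of_ne hn.ne']
      simpa using by positivity

/-- Smooth functions whose derivatives of order less than `p` vanish at `x`. -/
lemma of_vanish (hF : ContDiff ℝ (⊤ : ℕ∞) F) (hB : ∀ n, ‖iteratedFDeriv ℝ n F x‖ ≤ B n)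
    (hp : ∀ n < p, iteratedFDeriv ℝ n F x = 0) (hR : 1 ≤ R) : OrderAt B Λ R 0 p F x where
  contDiff := hF
  nonneg n := (norm_nonneg _).trans (hB n)
  bound n := by
    have h0 := (norm_nonneg _).trans (hB n)
    rcases lt_or_ge n p with h | h
    · rw [hp n h, norm_zero, mul_zero]
      positivity
    · rw [pow_zero, mul_one, mul_comm]
      gcongr
      exact hB n

end OrderAt

lemma exists_orderAt_lowPass {η : V3 → ℂ} (hη : IsSymbol η) :
    ∃ K : ℕ → ℝ, (∀ n, 0 ≤ K n) ∧ ∀ (R : ℝ) (_ : 1 ≤ R) (hR0 : 0 < R) (Λ : ℝ) (p q : ℕ), 0 ≤ Λ →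
      p ≤ 2 → ∀ (h : C(V3, ℝ)) (A : ℝ) (x : V3), 0 ≤ A →
        (∀ y, |h y| ≤ A * Λ ^ q * chord (x - y) ^ p) →
        OrderAt (fun n => K n * A) Λ R q p (lowPass hη hR0 h) x := by
  choose K hK0 hK using fun n => exists_norm_iteratedFDeriv_symbolOp_le n η hη
  refine ⟨K, hK0, fun R hR hR0 Λ p q hΛ hp h A x hA hh => ?_⟩
  have hS := contDiff_symbolOp hη hR0 h
  refine ⟨Complex.reCLM.contDiff.comp hS, fun n => mul_nonneg (hK0 n) hA, fun n => ?_⟩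
  have h1 : ‖iteratedFDeriv ℝ n (lowPass hη hR0 h) x‖ ≤ ‖iteratedFDeriv ℝ n (symbolOp η R h) x‖ := by
    have := Complex.reCLM.norm_iteratedFDeriv_comp_left (x := x) (n := n)
      hS.contDiffAt (by exact_mod_cast le_top)
    rwa [Complex.reCLM_norm, one_mul] at this
  have h2 := hK n R hR p hp h h.continuous (A * Λ ^ q) x (by positivity) hh
  calc _ ≤ R ^ p * ‖iteratedFDeriv ℝ n (symbolOp η R h) x‖ := by gcongr
    _ ≤ _ := h2
    _ = _ := by ring

/-- Multipliers equal to `1` near the origin reproduce the lowest trigonometric polynomials. -/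
lemma lowPass_one {η : V3 → ℂ} (hη : IsSymbol η) {R : ℝ} (hR : 0 < R) (h1 : η 0 = 1) (z : V3) :
    lowPass hη hR 1 z = 1 := by
  have h0 : latt R 0 = 0 := by
    funext i; simp [latt]
  have hc : ∀ y, chr 0 y = 1 := fun y => by simp [chr]
  have := symbolOp_re_chr (η := η) (R := R) (n := 0) (by rw [h0, h1]) (by rw [neg_zero, h0, h1]) 1 z
  simp only [hc] at this
  have h2 : symbolOp η R (⇑(1 : C(V3, ℝ))) z = 1 := by
    convert this using 1 <;> simp [Pi.one_def]
  change (symbolOp η R (⇑(1 : C(V3, ℝ))) z).re = 1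
  rw [h2, Complex.one_re]

/-- The function `y ↦ sin (y j - c)`. -/
def sinCoord (j : Fin 3) (c : ℝ) : C(V3, ℝ) := ⟨fun y => Real.sin (y j - c), by fun_prop⟩

lemma lowPass_sinCoord {η : V3 → ℂ} (hη : IsSymbol η) {R : ℝ} (hR : 0 < R) {j : Fin 3}
    (h1 : η (latt R (Pi.single j 1)) = 1) (h2 : η (latt R (-Pi.single j 1)) = 1) (c : ℝ) (z : V3) :
    lowPass hη hR (sinCoord j c) z = sinCoord j c z := by
  have hc : ∀ y : V3, (-Complex.I * Complex.exp (-(Complex.I * c)) * chr (Pi.single j 1) y).re =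
      Real.sin (y j - c) := by
    intro y
    have hs : (∑ i, ((Pi.single j 1 : Fin 3 → ℤ) i : ℝ) * y i) = y j := by
      rw [Finset.sum_eq_single j] <;> simp +contextual
    rw [chr, hs, mul_assoc, ← Complex.exp_add,
      show -(Complex.I * (c : ℂ)) + Complex.I * (y j : ℂ) = ((y j - c : ℝ) : ℂ) * Complex.I by
        push_cast; ring, Complex.exp_mul_I, ← Complex.ofReal_cos, ← Complex.ofReal_sin]
    generalize y j - c = s
    simp [-Complex.ofReal_cos, -Complex.ofReal_sin]
  have := symbolOp_re_chr h1 h2 (-Complex.I * Complex.exp (-(Complex.I * c))) z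
  simp only [hc] at this
  change (symbolOp η R (fun y => Real.sin (y j - c)) z).re = Real.sin (z j - c)
  rw [this, Complex.ofReal_re]

/-- Periodicity of a function of the space variable alone. -/
def PerSpace {α : Type*} (f : V3 → α) : Prop :=
  ∀ (x : V3) (v : Fin 3 → ℤ), f (fun i => x i + 2 * Real.pi * v i) = f x

/-- For periodic functions the Euclidean distance in a pointwise bound may be replaced by the
chordal one. -/
lemma PerSpace.abs_le_chord {Φ : V3 → ℝ} (hΦ : PerSpace Φ) {L : ℝ} (hL : 0 ≤ L) {p : ℕ} {x : V3}
    (h : ∀ y, |Φ y| ≤ L * ‖x - y‖ ^ p) (y : V3) :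
    |Φ y| ≤ L * (Real.pi / 2) ^ p * chord (x - y) ^ p := by
  have hpi := Real.pi_pos
  let v : Fin 3 → ℤ := fun i => round ((x i - y i) / (2 * Real.pi))
  rw [← hΦ y v, mul_assoc, ← mul_pow]
  refine (h _).trans ?_
  gcongr
  refine (pi_norm_le_iff_of_nonneg (mul_nonneg (by positivity) (chord_nonneg _))).2 fun i => ?_
  have hs : (x - fun i => y i + 2 * Real.pi * v i) i = x i - y i - v i * (2 * Real.pi) := by
    simp only [Pi.sub_apply]; ring
  rw [hs, Real.norm_eq_abs]
  have h1 : |x i - y i - v i * (2 * Real.pi)| ≤ Real.pi := by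
    have h2 := abs_sub_round ((x i - y i) / (2 * Real.pi))
    have h3 : x i - y i - v i * (2 * Real.pi) =
        ((x i - y i) / (2 * Real.pi) - v i) * (2 * Real.pi) := by
      field_simp
    rw [h3, abs_mul, abs_of_pos (by positivity : 0 < 2 * Real.pi)]
    calc _ ≤ 1 / 2 * (2 * Real.pi) := by gcongr
      _ = _ := by ring
  have h4 := mul_abs_le_abs_two_mul_sin_half h1
  have h5 : |2 * Real.sin ((x i - y i - v i * (2 * Real.pi)) / 2)| =
      |2 * Real.sin ((x - y) i / 2)| := by
    rw [show (x i - y i - v i * (2 * Real.pi)) / 2 = (x - y) i / 2 - v i * Real.pi by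
      simp only [Pi.sub_apply]; ring, Real.sin_sub_int_mul_pi, abs_mul, abs_mul, abs_mul]
    rcases Int.even_or_odd (v i) with hv | hv
    · rw [hv.neg_one_zpow, abs_one, one_mul]
    · rw [hv.neg_one_zpow, abs_neg, abs_one, one_mul]
  rw [h5] at h4
  have h6 := h4.trans (abs_two_mul_sin_half_le_chord (x - y) i)
  calc |x i - y i - v i * (2 * Real.pi)|
      = Real.pi / 2 * (2 / Real.pi * |x i - y i - v i * (2 * Real.pi)|) := by field_simp
    _ ≤ _ := by gcongr

lemma abs_sub_le_of_norm_iteratedFDeriv_one_le {F : V3 → ℝ} (hF : ContDiff ℝ (⊤ : ℕ∞) F) {C : ℝ}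
    (hC : ∀ y, ‖iteratedFDeriv ℝ 1 F y‖ ≤ C) (x y : V3) : |F y - F x| ≤ C * ‖x - y‖ := by
  have h := convex_univ.norm_image_sub_le_of_norm_fderiv_le (f := F) (C := C) (𝕜 := ℝ)
    (fun z _ => hF.differentiable (by simp) z) (fun z _ => by
      rw [← norm_iteratedFDeriv_one]; exact hC z) (Set.mem_univ x) (Set.mem_univ y)
  rwa [Real.norm_eq_abs, norm_sub_rev y x] at h

lemma abs_le_of_norm_iteratedFDeriv_two_le {F : V3 → ℝ} (hF : ContDiff ℝ (⊤ : ℕ∞) F) {C : ℝ}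
    (hC : ∀ y, ‖iteratedFDeriv ℝ 2 F y‖ ≤ C) {x : V3} (h0 : F x = 0)
    (h1 : iteratedFDeriv ℝ 1 F x = 0) (y : V3) : |F y| ≤ C * ‖x - y‖ ^ 2 := by
  have hF' : ContDiff ℝ (⊤ : ℕ∞) (fderiv ℝ F) := hF.fderiv_right (by simp)
  have hd : ∀ z, ‖fderiv ℝ F z‖ ≤ C * ‖z - x‖ := fun z => by
    have h := convex_univ.norm_image_sub_le_of_norm_fderiv_le (f := fderiv ℝ F) (C := C) (𝕜 := ℝ)
      (fun z _ => hF'.differentiable (by simp) z) (fun z _ => by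
        rw [← norm_iteratedFDeriv_one, norm_iteratedFDeriv_fderiv]; exact hC z)
      (Set.mem_univ x) (Set.mem_univ z)
    rwa [show fderiv ℝ F x = 0 from norm_eq_zero.1 (by rw [← norm_iteratedFDeriv_one, h1, norm_zero]),
      sub_zero] at h
  have hC0 : 0 ≤ C := (norm_nonneg _).trans (hC x)
  have h := (convex_closedBall x ‖x - y‖).norm_image_sub_le_of_norm_fderiv_le (f := F)
    (C := C * ‖x - y‖) (𝕜 := ℝ) (fun z _ => hF.differentiable (by simp) z)
    (fun z hz => (hd z).trans (by
      gcongr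
      exact mem_closedBall_iff_norm.1 hz))
    (Metric.mem_closedBall_self (norm_nonneg _)) (mem_closedBall_iff_norm'.2 le_rfl)
  rw [h0, sub_zero, norm_sub_rev y x, Real.norm_eq_abs] at h
  linarith

lemma fderiv_sin_coord_apply (i j : Fin 3) (c : ℝ) (y : V3) :
    fderiv ℝ (fun y : V3 => Real.sin (y j + c)) y (e3 i) =
      if i = j then Real.sin (y j + (c + Real.pi / 2)) else 0 := by
  have h1 : HasFDerivAt (fun y : V3 => y j + c)
      (ContinuousLinearMap.proj (R := ℝ) (φ := fun _ : Fin 3 => ℝ) j) y :=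
    (ContinuousLinearMap.proj (R := ℝ) (φ := fun _ : Fin 3 => ℝ) j).hasFDerivAt.add_const c
  rw [h1.sin.fderiv, ← add_assoc, Real.sin_add_pi_div_two]
  by_cases h : i = j
  · subst h
    simp [e3]
  · simp [e3, h, Ne.symm h]

lemma contDiff_sin_coord (j : Fin 3) (c : ℝ) :
    ContDiff ℝ (⊤ : ℕ∞) fun y : V3 => Real.sin (y j + c) :=
  ((contDiff_apply ℝ ℝ j).add contDiff_const).sin

lemma norm_iteratedFDeriv_sin_coord_le (j : Fin 3) (n : ℕ) : ∀ (c : ℝ) (y : V3),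
    ‖iteratedFDeriv ℝ n (fun y : V3 => Real.sin (y j + c)) y‖ ≤ 1 := by
  induction n with
  | zero =>
    intro c y
    rw [norm_iteratedFDeriv_zero]
    exact Real.abs_sin_le_one _
  | succ n ih =>
    intro c y
    refine (norm_iteratedFDeriv_succ_le (contDiff_sin_coord j c) n y).trans ?_
    simp_rw [fderiv_sin_coord_apply]
    rw [Finset.sum_eq_single j]
    · simpa using ih (c + Real.pi / 2) y
    · intro i _ hij
      simp [hij]
    · simp

/-- The remainder of `r` after subtraction of a trigonometric first-order expansion at `x`. -/
def trigRem (r : C(V3, ℝ)) (x : V3) : C(V3, ℝ) :=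
  r - r x • 1 - ∑ j, fderiv ℝ r x (e3 j) • sinCoord j (x j)

lemma trigRem_apply (r : C(V3, ℝ)) (x y : V3) :
    trigRem r x y = r y - r x - ∑ j, fderiv ℝ r x (e3 j) * Real.sin (y j + -x j) := by
  simp [trigRem, sinCoord, sub_eq_add_neg]

lemma contDiff_trigRem {r : C(V3, ℝ)} (hr : ContDiff ℝ (⊤ : ℕ∞) r) (x : V3) :
    ContDiff ℝ (⊤ : ℕ∞) (trigRem r x) := by
  rw [show ⇑(trigRem r x) = _ from funext (trigRem_apply r x)]
  exact (hr.sub contDiff_const).sub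
    (ContDiff.sum fun j _ => contDiff_const.mul (contDiff_sin_coord j _))

lemma iteratedFDeriv_one_trigRem {r : C(V3, ℝ)} (hr : ContDiff ℝ (⊤ : ℕ∞) r) (x : V3) :
    iteratedFDeriv ℝ 1 (trigRem r x) x = 0 := by
  refine norm_le_zero_iff.1 ((norm_iteratedFDeriv_succ_le (contDiff_trigRem hr x) 0 x).trans_eq ?_)
  refine Finset.sum_eq_zero fun i _ => ?_
  rw [norm_iteratedFDeriv_zero, norm_eq_zero, show ⇑(trigRem r x) = _ from
    funext (trigRem_apply r x)]
  have h1 : DifferentiableAt ℝ r x := hr.differentiable (by simp) x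
  have h2 : ∀ j, DifferentiableAt ℝ (fun y : V3 => Real.sin (y j + -x j)) x := fun j =>
    (contDiff_sin_coord j _).differentiable (by simp) x
  rw [fderiv_fun_sub (h1.sub_const _) (DifferentiableAt.fun_sum fun j _ => (h2 j).const_mul _),
    fderiv_sub_const, fderiv_fun_sum fun j _ => (h2 j).const_mul _, sub_apply, sum_apply,
    Finset.sum_eq_single i]
  · rw [fderiv_const_mul (h2 i), smul_apply, fderiv_sin_coord_apply]
    simp [← add_assoc]
  · intro j _ hj
    rw [fderiv_const_mul (h2 j), smul_apply, fderiv_sin_coord_apply, if_neg hj.symm, smul_zero]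
  · simp

lemma norm_iteratedFDeriv_trigRem_le {r : C(V3, ℝ)} (hr : ContDiff ℝ (⊤ : ℕ∞) r)
    {ρ : ℕ → ℝ} (hρ : ∀ n y, ‖iteratedFDeriv ℝ n r y‖ ≤ ρ n)
    (x : V3) (n : ℕ) (y : V3) :
    ‖iteratedFDeriv ℝ n (trigRem r x) y‖ ≤ ρ n + ρ 0 + 3 * ρ 1 := by
  have h2 : ∀ j, ContDiff ℝ (⊤ : ℕ∞)
      (fun y : V3 => fderiv ℝ r x (e3 j) * Real.sin (y j + -x j)) := fun j =>
    contDiff_const.mul (contDiff_sin_coord j _)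
  have hn : ((n : ℕ) : WithTop ℕ∞) ≤ ((⊤ : ℕ∞) : WithTop ℕ∞) := by exact_mod_cast le_top
  have hd : ∀ j, |fderiv ℝ r x (e3 j)| ≤ ρ 1 := fun j => by
    have := (fderiv ℝ r x).le_opNorm (e3 j)
    rw [norm_e3, mul_one, ← norm_iteratedFDeriv_one] at this
    exact this.trans (hρ 1 x)
  have hs : ‖iteratedFDeriv ℝ n (fun y : V3 =>
      ∑ j, fderiv ℝ r x (e3 j) * Real.sin (y j + -x j)) y‖ ≤ 3 * ρ 1 := by
    refine (norm_iteratedFDeriv_sum_le _ (fun j _ => h2 j) n y).trans ?_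
    refine (Finset.sum_le_sum (g := fun _ => ρ 1) fun j _ => ?_).trans_eq (by simp)
    have : iteratedFDeriv ℝ n (fun y : V3 => fderiv ℝ r x (e3 j) * Real.sin (y j + -x j)) y =
        fderiv ℝ r x (e3 j) • iteratedFDeriv ℝ n (fun y : V3 => Real.sin (y j + -x j)) y :=
      iteratedFDeriv_const_smul_apply (a := fderiv ℝ r x (e3 j))
        ((contDiff_sin_coord j (-x j)).of_le hn).contDiffAt
    rw [this, norm_smul, Real.norm_eq_abs]
    exact (mul_le_of_le_one_right (abs_nonneg _) (norm_iteratedFDeriv_sin_coord_le j n _ y)).trans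
      (hd j)
  have hc : ‖iteratedFDeriv ℝ n (fun _ : V3 => r x) y‖ ≤ ρ 0 := by
    have h0 := hρ 0 x
    rw [norm_iteratedFDeriv_zero] at h0
    rcases Nat.eq_zero_or_pos n with rfl | hn
    · rwa [norm_iteratedFDeriv_zero]
    · rw [iteratedFDeriv_const_of_ne hn.ne']
      simpa using (norm_nonneg _).trans h0
  have hc' : ContDiff ℝ (⊤ : ℕ∞) fun _ : V3 => r x := contDiff_const
  have e1 : iteratedFDeriv ℝ n (trigRem r x) y = iteratedFDeriv ℝ n r y -
      iteratedFDeriv ℝ n (fun _ : V3 => r x) y - iteratedFDeriv ℝ n (fun y : V3 =>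
        ∑ j, fderiv ℝ r x (e3 j) * Real.sin (y j + -x j)) y := by
    rw [show ⇑(trigRem r x) = _ from funext (trigRem_apply r x)]
    rw [← iteratedFDeriv_sub_apply (hr.of_le hn).contDiffAt (hc'.of_le hn).contDiffAt]
    exact iteratedFDeriv_sub_apply ((hr.sub hc').of_le hn).contDiffAt
      ((ContDiff.sum fun j _ => h2 j).of_le hn).contDiffAt
  rw [e1]
  refine (norm_sub_le _ _).trans (add_le_add ((norm_sub_le _ _).trans (add_le_add (hρ n y) hc)) hs)


/-- Decomposition of the quadratic commutator into terms vanishing to second order at `x`. -/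
lemma quadratic_commutator_eq {η : V3 → ℂ} (hη : IsSymbol η) {R : ℝ} (hR : 0 < R)
    (h0 : η 0 = 1) (h1 : ∀ j, η (latt R (Pi.single j 1)) = 1)
    (h2 : ∀ j, η (latt R (-Pi.single j 1)) = 1) (f g r : C(V3, ℝ)) (x z : V3) :
    r z * (lowPass hη hR f z * lowPass hη hR g z) - lowPass hη hR (f * g * r) z =
      f x * g x * (trigRem r x z - lowPass hη hR (trigRem r x) z) +
      f x * ((r z - r x) * lowPass hη hR (g - g x • 1) z -
        lowPass hη hR ((g - g x • 1) * (r - r x • 1)) z) +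
      g x * ((r z - r x) * lowPass hη hR (f - f x • 1) z -
        lowPass hη hR ((f - f x • 1) * (r - r x • 1)) z) +
      (r z * (lowPass hη hR (f - f x • 1) z * lowPass hη hR (g - g x • 1) z) -
        lowPass hη hR ((f - f x • 1) * (g - g x • 1) * r) z) := by
  set P := lowPass hη hR with hP
  have hone : P 1 z = 1 := lowPass_one hη hR h0 z
  have hsin : ∀ j, P (sinCoord j (x j)) z = sinCoord j (x j) z := fun j =>
    lowPass_sinCoord hη hR (h1 j) (h2 j) _ z
  have hf : P (f - f x • 1) z = P f z - f x := by
    simp [hone]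
  have hg : P (g - g x • 1) z = P g z - g x := by
    simp [hone]
  have hr : trigRem r x z - P (trigRem r x) z = r z - P r z := by
    simp only [trigRem, map_sub, map_smul, map_sum, Pi.sub_apply, Pi.smul_apply, hone,
      Finset.sum_apply, hsin, ContinuousMap.sub_apply, ContinuousMap.smul_apply,
      ContinuousMap.sum_apply, ContinuousMap.one_apply]
    ring
  have e1 : (g - g x • 1) * (r - r x • 1) = g * r - r x • g - g x • r + (g x * r x) • 1 := by
    ext y; simp; ring
  have e2 : (f - f x • 1) * (r - r x • 1) = f * r - r x • f - f x • r + (f x * r x) • 1 := by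
    ext y; simp; ring
  have e3 : (f - f x • 1) * (g - g x • 1) * r =
      f * g * r - g x • (f * r) - f x • (g * r) + (f x * g x) • r := by
    ext y; simp; ring
  rw [hf, hg, hr, e1, e2, e3]
  simp only [map_add, map_sub, map_smul, Pi.add_apply, Pi.sub_apply, Pi.smul_apply, hone,
    smul_eq_mul]
  ring

/-- The quadratic commutator gains two powers of the cutoff frequency. -/
lemma exists_orderAt_quadratic_commutator {η : V3 → ℂ} (hη : IsSymbol η) (h0 : η 0 = 1)
    (h1 : ∀ R : ℝ, 1 ≤ R → ∀ j, η (latt R (Pi.single j 1)) = 1)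
    (h2 : ∀ R : ℝ, 1 ≤ R → ∀ j, η (latt R (-Pi.single j 1)) = 1)
    (ρ : ℕ → ℝ) (hρ0 : ∀ n, 0 ≤ ρ n) (M : ℝ) (hM : 0 ≤ M) :
    ∃ B : ℕ → ℝ, ∀ (R : ℝ) (_ : 1 ≤ R) (hR0 : 0 < R) (Λ : ℝ), 1 ≤ Λ →
      ∀ f g r : C(V3, ℝ), ContDiff ℝ (⊤ : ℕ∞) r → PerSpace f → PerSpace g → PerSpace r →
        (∀ n y, ‖iteratedFDeriv ℝ n r y‖ ≤ ρ n) →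
        (∀ y, |f y| ≤ M) → (∀ y, |g y| ≤ M) →
        (∀ x y, |f y - f x| ≤ M * Λ * ‖x - y‖) → (∀ x y, |g y - g x| ≤ M * Λ * ‖x - y‖) →
        ∀ x, OrderAt B Λ R 2 2 (fun z => r z * (lowPass hη hR0 f z * lowPass hη hR0 g z) -
          lowPass hη hR0 (f * g * r) z) x := by
  obtain ⟨K, hK0, hK⟩ := exists_orderAt_lowPass hη
  have hpi := Real.pi_pos
  refine ⟨?_, fun R hR hR0 Λ hΛ f g r hr hfper hgper hrper hρ hfM hgM hfL hgL x => ?_⟩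
  rotate_left
  · have hΛ0 : 0 ≤ Λ := by linarith
    have hρ0' := hρ0 0
    have hρ1' := hρ0 1
    have hρ2' := hρ0 2
    rw [show (fun z => r z * (lowPass hη hR0 f z * lowPass hη hR0 g z) -
      lowPass hη hR0 (f * g * r) z) = _ from funext fun z =>
        quadratic_commutator_eq hη hR0 h0 (h1 R hR) (h2 R hR) f g r x z]
    have chordOne : ∀ {h : C(V3, ℝ)} {L : ℝ}, 0 ≤ L → PerSpace h →
        (∀ x y, |h y - h x| ≤ L * ‖x - y‖) →
        ∀ y, |(h - h x • 1 : C(V3, ℝ)) y| ≤ L * (Real.pi / 2) * chord (x - y) := by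
      intro h L hL hper hLip y
      have hper' : PerSpace fun y => h y - h x := fun y v => by
        change h _ - _ = _; rw [hper]
      have := hper'.abs_le_chord hL (p := 1) (x := x) (fun y => by
        rw [pow_one]; exact hLip x y) y
      simpa using this
    have cf := chordOne (by positivity) hfper hfL
    have cg := chordOne (by positivity) hgper hgL
    have cr := chordOne (hρ0 1) hrper (abs_sub_le_of_norm_iteratedFDeriv_one_le hr (hρ 1))
    have br : ∀ y, |r y| ≤ ρ 0 := fun y => by
      simpa only [norm_iteratedFDeriv_zero, Real.norm_eq_abs] using hρ 0 y
    -- the remainder of the density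
    have t0 : trigRem r x x = 0 := by simp [trigRem_apply]
    have t1 := iteratedFDeriv_one_trigRem hr x
    have tper : PerSpace (trigRem r x) := fun y v => by
      simp only [trigRem_apply]
      rw [hrper]
      congr 1
      refine Finset.sum_congr rfl fun j _ => ?_
      rw [show y j + 2 * Real.pi * v j + -x j = (y j + -x j) + v j * (2 * Real.pi) by ring,
        Real.sin_add_int_mul_two_pi]
    have tchord := tper.abs_le_chord (L := ρ 2 + ρ 0 + 3 * ρ 1) (by positivity) (p := 2) (x := x)
      (abs_le_of_norm_iteratedFDeriv_two_le (contDiff_trigRem hr x)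
        (norm_iteratedFDeriv_trigRem_le hr hρ x 2) t0 t1)
    have T : OrderAt _ Λ R 0 2 (trigRem r x) x := OrderAt.of_vanish (contDiff_trigRem hr x)
      (fun n => norm_iteratedFDeriv_trigRem_le hr hρ x n x) (fun n hn => by
        interval_cases n
        · rw [← norm_eq_zero, norm_iteratedFDeriv_zero, t0, norm_zero]
        · exact t1) hR
    have PT := hK R hR hR0 Λ 2 0 hΛ0 le_rfl (trigRem r x)
      ((ρ 2 + ρ 0 + 3 * ρ 1) * (Real.pi / 2) ^ 2) x (by positivity)
      (fun y => by simpa only [pow_zero, mul_one] using tchord y)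
    have cMf : OrderAt _ Λ R 0 0 (fun _ => f x) x := OrderAt.const (hfM x) hR
    have cMg : OrderAt _ Λ R 0 0 (fun _ => g x) x := OrderAt.const (hgM x) hR
    have S1 := ((cMf.mul cMg hΛ hR).mul (T.sub PT hR) hΛ hR).mono hΛ hR (q' := 2) (by norm_num)
    -- the terms with one difference of `r`
    have hrd : OrderAt (fun n => ρ n + ρ 0) Λ R 0 1 (fun z => r z - r x) x :=
      OrderAt.of_vanish (hr.sub contDiff_const) (fun n => by
        have hn : ((n : ℕ) : WithTop ℕ∞) ≤ ((⊤ : ℕ∞) : WithTop ℕ∞) := by exact_mod_cast le_top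
        have hc : ContDiff ℝ n fun _ : V3 => r x := contDiff_const
        rw [show iteratedFDeriv ℝ n (fun z => r z - r x) x = iteratedFDeriv ℝ n r x -
          iteratedFDeriv ℝ n (fun _ => r x) x from
            iteratedFDeriv_sub_apply (hr.of_le hn).contDiffAt hc.contDiffAt]
        refine (norm_sub_le _ _).trans (add_le_add (hρ n x) ?_)
        rcases Nat.eq_zero_or_pos n with rfl | hn
        · simpa only [norm_iteratedFDeriv_zero, Real.norm_eq_abs] using br x
        · rw [iteratedFDeriv_const_of_ne hn.ne']
          simpa using hρ0') (fun n hn => by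
        interval_cases n
        rw [← norm_eq_zero, norm_iteratedFDeriv_zero, sub_self, norm_zero]) hR
    have single : ∀ {h : C(V3, ℝ)},
        (∀ y, |(h - h x • 1 : C(V3, ℝ)) y| ≤ M * Λ * (Real.pi / 2) * chord (x - y)) →
        OrderAt (fun n => K n * (M * (Real.pi / 2))) Λ R 1 1 (lowPass hη hR0 (h - h x • 1)) x :=
      fun {h} ch => hK R hR hR0 Λ 1 1 hΛ0 (by norm_num) _ _ x (by positivity) fun y =>
        (ch y).trans_eq (by ring)
    have double : ∀ {h : C(V3, ℝ)},
        (∀ y, |(h - h x • 1 : C(V3, ℝ)) y| ≤ M * Λ * (Real.pi / 2) * chord (x - y)) →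
        OrderAt (fun n => K n * (M * (Real.pi / 2) * (ρ 1 * (Real.pi / 2)))) Λ R 1 2
          (lowPass hη hR0 ((h - h x • 1) * (r - r x • 1))) x :=
      fun {h} ch => hK R hR hR0 Λ 2 1 hΛ0 le_rfl _ _ x (by positivity) fun y => by
        rw [ContinuousMap.mul_apply, abs_mul]
        refine (mul_le_mul (ch y) (cr y) (abs_nonneg _) ?_).trans_eq (by ring)
        exact mul_nonneg (by positivity) (chord_nonneg _)
    have S2 := (cMf.mul ((hrd.mul (single cg) hΛ hR).sub (double cg) hR) hΛ hR).mono hΛ hR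
      (q' := 2) (by norm_num)
    have S3 := (cMg.mul ((hrd.mul (single cf) hΛ hR).sub (double cf) hR) hΛ hR).mono hΛ hR
      (q' := 2) (by norm_num)
    have hr0 : OrderAt ρ Λ R 0 0 r x :=
      OrderAt.of_vanish hr (fun n => hρ n x) (fun n hn => absurd hn n.not_lt_zero) hR
    have PFGR := hK R hR hR0 Λ 2 2 hΛ0 le_rfl ((f - f x • 1) * (g - g x • 1) * r)
      (M * (Real.pi / 2) * (M * (Real.pi / 2)) * ρ 0) x (by positivity) (fun y => by
        have hc := chord_nonneg (x - y)
        rw [ContinuousMap.mul_apply, ContinuousMap.mul_apply, abs_mul, abs_mul]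
        refine (mul_le_mul (mul_le_mul (cf y) (cg y) (abs_nonneg _) (by positivity)) (br y)
          (abs_nonneg _) (by positivity)).trans_eq (by ring))
    have S4 := (hr0.mul ((single cf).mul (single cg) hΛ hR) hΛ hR).sub PFGR hR
    exact ((S1.add S2 hR).add S3 hR).add S4 hR

lemma PerSpace.norm_iteratedFDeriv_eq {f : V3 → ℝ} (hf : PerSpace f) (n : ℕ) (x : V3)
    (v : Fin 3 → ℤ) :
    iteratedFDeriv ℝ n f (fun i => x i + 2 * Real.pi * v i) = iteratedFDeriv ℝ n f x := by
  rw [show (fun i => x i + 2 * Real.pi * v i) = x + (fun i => 2 * Real.pi * v i) from rfl,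
    ← iteratedFDeriv_comp_add_right,
    show (fun z => f (z + fun i => 2 * Real.pi * v i)) = f from funext fun z => hf z v]

lemma exists_shift_mem_T3 (x : V3) :
    ∃ v : Fin 3 → ℤ, (fun i => x i + 2 * Real.pi * v i) ∈ T3 := by
  have hpi := Real.pi_pos
  refine ⟨fun i => -round (x i / (2 * Real.pi)), ?_⟩
  have h : ∀ i, |x i + 2 * Real.pi * ((-round (x i / (2 * Real.pi)) : ℤ) : ℝ)| ≤ Real.pi := by
    intro i
    have h2 := abs_sub_round (x i / (2 * Real.pi))
    have h3 : x i + 2 * Real.pi * ((-round (x i / (2 * Real.pi)) : ℤ) : ℝ) =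
        (x i / (2 * Real.pi) - round (x i / (2 * Real.pi))) * (2 * Real.pi) := by
      push_cast
      field_simp
      ring
    rw [h3, abs_mul, abs_of_pos (by positivity : 0 < 2 * Real.pi)]
    calc _ ≤ 1 / 2 * (2 * Real.pi) := by gcongr
      _ = _ := by ring
  exact ⟨fun i => (abs_le.1 (h i)).1, fun i => (abs_le.1 (h i)).2⟩

lemma norm_iteratedFDeriv_slice_le {r : ℝ × V3 → ℝ} (hr : ContDiff ℝ (⊤ : ℕ∞) r) (n : ℕ) (t : ℝ)
    (x : V3) : ‖iteratedFDeriv ℝ n (fun y => r (t, y)) x‖ ≤ ‖iteratedFDeriv ℝ n r (t, x)‖ := by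
  have hr' : ContDiff ℝ n fun z : ℝ × V3 => r ((t, 0) + z) :=
    (hr.comp (contDiff_const.add contDiff_id)).of_le (by exact_mod_cast le_top)
  have h1 : (fun y => r (t, y)) =
      (fun z : ℝ × V3 => r ((t, 0) + z)) ∘ ContinuousLinearMap.inr ℝ ℝ V3 := by
    funext y; simp
  rw [h1, ContinuousLinearMap.iteratedFDeriv_comp_right _ hr' _ le_rfl,
    iteratedFDeriv_comp_add_left]
  refine (ContinuousMultilinearMap.norm_compContinuousLinearMap_le _ _).trans ?_
  have h2 : ‖ContinuousLinearMap.inr ℝ ℝ V3‖ ≤ 1 :=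
    ContinuousLinearMap.opNorm_le_bound _ zero_le_one fun y => by simp
  refine (mul_le_of_le_one_right (norm_nonneg _)
    (Finset.prod_le_one (fun _ _ => norm_nonneg _) fun _ _ => h2)).trans_eq ?_
  simp

lemma exists_norm_iteratedFDeriv_slice_le {r : ℝ × V3 → ℝ} (hr : ContDiff ℝ (⊤ : ℕ∞) r)
    (hper : PerSpaceT r) (T : ℝ) (n : ℕ) :
    ∃ C : ℝ, 0 ≤ C ∧ ∀ t ∈ Set.Icc (0 : ℝ) T, ∀ x,
      ‖iteratedFDeriv ℝ n (fun y => r (t, y)) x‖ ≤ C := by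
  obtain ⟨C, hC⟩ := (isCompact_Icc (a := (0 : ℝ)) (b := T)).prod isCompact_T3
    |>.exists_bound_of_continuousOn
      (hr.continuous_iteratedFDeriv (m := n) (by exact_mod_cast le_top)).continuousOn
  refine ⟨max C 0, le_max_right _ _, fun t ht x => le_max_of_le_left ?_⟩
  obtain ⟨v, hv⟩ := exists_shift_mem_T3 x
  have hp : PerSpace fun y => r (t, y) := fun y v => hper t y v
  rw [← hp.norm_iteratedFDeriv_eq n x v]
  exact (norm_iteratedFDeriv_slice_le hr n t _).trans (hC _ ⟨ht, hv⟩)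

lemma abs_coord_le_enorm3 (x : V3) (i : Fin 3) : |x i| ≤ enorm3 x := by
  rw [← Real.sqrt_sq_eq_abs]
  exact Real.sqrt_le_sqrt
    (Finset.single_le_sum (f := fun i => x i ^ 2) (fun i _ => sq_nonneg (x i)) (Finset.mem_univ i))

lemma norm_le_enorm3 (x : V3) : ‖x‖ ≤ enorm3 x :=
  (pi_norm_le_iff_of_nonneg (Real.sqrt_nonneg _)).2 (abs_coord_le_enorm3 x)

lemma IsCutoff.isSymbol {φ : V3 → ℝ} (hφ : IsCutoff φ) : IsSymbol fun ξ => (φ ξ : ℂ) :=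
  ⟨Complex.ofRealCLM.contDiff.comp hφ.1, fun ξ hξ => by
    beta_reduce
    rw [hφ.2.2.2 ξ (hξ.trans (norm_le_enorm3 ξ)), Complex.ofReal_zero]⟩

lemma IsCutoff.apply_latt_eq_one {φ : V3 → ℝ} (hφ : IsCutoff φ) {R : ℝ} (hR : 1 ≤ R)
    {k : Fin 3 → ℤ} (hk : ∑ i, (k i : ℝ) ^ 2 ≤ 1) : φ (latt R k) = 1 := by
  refine hφ.2.2.1 _ (Real.sqrt_le_one.2 ?_)
  simp only [latt, div_pow, ← Finset.sum_div]
  exact div_le_one_of_le₀ (hk.trans (one_le_pow₀ hR)) (by positivity)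

lemma one_le_two_zpow_Jof {S : ℝ} (hS : 1 ≤ S) : 1 ≤ (2 : ℝ) ^ Jof S :=
  one_le_zpow₀ one_le_two (Int.floor_nonneg.2 (Real.logb_nonneg one_lt_two hS))

lemma two_zpow_Jof_le {S : ℝ} (hS : 0 < S) : (2 : ℝ) ^ Jof S ≤ S := by
  rw [← Real.rpow_intCast]
  exact (Real.rpow_le_rpow_of_exponent_le one_le_two (Int.floor_le _)).trans_eq
    (Real.rpow_logb two_pos (by norm_num) hS)

lemma le_two_mul_two_zpow_Jof {S : ℝ} (hS : 0 < S) : S ≤ 2 * (2 : ℝ) ^ Jof S := by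
  rw [mul_comm, ← zpow_add_one₀ two_ne_zero, ← Real.rpow_intCast]
  refine (Real.rpow_logb two_pos (by norm_num) hS).symm.trans_le
    (Real.rpow_le_rpow_of_exponent_le one_le_two ?_)
  push_cast
  exact (Int.lt_floor_add_one _).le

lemma norm_iteratedFDeriv_pi_le {F : V3 → V3} (hF : ∀ i, ContDiff ℝ (⊤ : ℕ∞) fun y => F y i)
    (n : ℕ) (x : V3) :
    ‖iteratedFDeriv ℝ n F x‖ ≤ ∑ i, ‖iteratedFDeriv ℝ n (fun y => F y i) x‖ := by
  let L : Fin 3 → ℝ →L[ℝ] V3 := fun i => ContinuousLinearMap.single ℝ (fun _ : Fin 3 => ℝ) i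
  have hL : ∀ i, ‖L i‖ ≤ 1 := fun i =>
    ContinuousLinearMap.opNorm_le_bound _ zero_le_one fun c => by
      rw [one_mul]
      exact (Pi.norm_single (G := fun _ : Fin 3 => ℝ) (i := i) c).le
  have hdec : F = fun y => ∑ i, (L i ∘ fun y => F y i) y := by
    funext y
    simp [L, Finset.univ_sum_single]
  conv_lhs => rw [hdec]
  refine (norm_iteratedFDeriv_sum_le _ (fun i _ => (L i).contDiff.comp (hF i)) n x).trans
    (Finset.sum_le_sum fun i _ => ?_)
  refine ((L i).norm_iteratedFDeriv_comp_left (hF i).contDiffAt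
    (by exact_mod_cast le_top)).trans ?_
  exact mul_le_of_le_one_left (norm_nonneg _) (hL i)

/-- The divergence loses one derivative. -/
lemma norm_iteratedFDeriv_div_le {G : Fin 3 → Fin 3 → V3 → ℝ}
    (hG : ∀ i j, ContDiff ℝ (⊤ : ℕ∞) (G i j)) (n : ℕ) (x : V3) :
    ‖iteratedFDeriv ℝ n (fun y => (fun i => ∑ j, fderiv ℝ (G i j) y (e3 j) : V3)) x‖ ≤
      ∑ i, ∑ j, ‖iteratedFDeriv ℝ (n + 1) (G i j) x‖ := by
  have hd : ∀ i j, ContDiff ℝ (⊤ : ℕ∞) fun y => fderiv ℝ (G i j) y (e3 j) := fun i j => by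
    have h : ContDiff ℝ (⊤ : ℕ∞) (fderiv ℝ (G i j)) := (hG i j).fderiv_right (by simp)
    exact h.clm_apply contDiff_const
  refine (norm_iteratedFDeriv_pi_le (fun i => ContDiff.sum fun j _ => hd i j) n x).trans
    (Finset.sum_le_sum fun i _ => ?_)
  refine (norm_iteratedFDeriv_sum_le _ (fun j _ => hd i j) n x).trans
    (Finset.sum_le_sum fun j _ => norm_iteratedFDeriv_fderiv_apply_le (hG i j) j n x)

/-- Passing from the dyadic frequency `R` to the scale `ℓ`. -/
lemma pow_succ_le_mul_rpow {R ℓ : ℝ} (hR : 1 ≤ R) (hℓ0 : 0 < ℓ) (hℓ1 : ℓ < 1) (h1 : R ≤ ℓ⁻¹)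
    (h2 : ℓ⁻¹ ≤ 2 * R) {n N : ℕ} (hn : n ≤ N) :
    R ^ (n + 1) ≤ 2 * ℓ ^ ((1 : ℝ) - N) * R ^ 2 := by
  have hR0 : 0 < R := by linarith
  have hmono : ℓ ^ ((1 : ℝ) - n) ≤ ℓ ^ ((1 : ℝ) - N) :=
    Real.rpow_le_rpow_of_exponent_ge hℓ0 hℓ1.le (by
      have : (n : ℝ) ≤ N := by exact_mod_cast hn
      linarith)
  have h3 : R ^ n ≤ ℓ⁻¹ ^ n := by gcongr
  have h4 : 1 ≤ 2 * R * ℓ := by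
    calc 1 = ℓ⁻¹ * ℓ := by field_simp
      _ ≤ _ := by gcongr
  have h5 : ℓ ^ ((1 : ℝ) - n) = ℓ * ℓ⁻¹ ^ n := by
    rw [Real.rpow_sub hℓ0, Real.rpow_one, Real.rpow_natCast, inv_pow, div_eq_mul_inv]
  calc R ^ (n + 1) = R ^ n * R := pow_succ _ _
    _ ≤ ℓ⁻¹ ^ n * R * (2 * R * ℓ) := by
        refine (mul_le_mul_of_nonneg_right h3 hR0.le).trans (le_mul_of_one_le_right ?_ h4)
        positivity
    _ = 2 * ℓ ^ ((1 : ℝ) - n) * R ^ 2 := by rw [h5]; ring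
    _ ≤ _ := by gcongr

/-- **Quadratic commutator estimate.**  For `m` with `‖m‖₀ ≤ M`, `‖m‖₁ ≤ M λ δ^{1/2}`
and a smooth density `ϱ ≥ ε₀`, the quadratic form
`Q(m,m) = div(m_ℓ ⊗ m_ℓ/ϱ - P_{≤ℓ⁻¹}(m⊗m/ϱ))` satisfies
`‖Q(m,m)‖_N ≤ C ℓ^{1-N} (λ δ^{1/2})²` for `0 ≤ N ≤ N̄`, with `C = C(N̄, M, ε₀, ϱ, φ)`. -/
theorem statement10 (φ : V3 → ℝ) (hφ : IsCutoff φ) (Nbar : ℕ)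
    (M T ε₀ : ℝ) (hM : 1 ≤ M) (hT : 0 < T) (hε₀ : 0 < ε₀)
    (ϱ : ℝ × V3 → ℝ) (hϱ : ContDiff ℝ (⊤ : ℕ∞) ϱ) (hϱper : PerSpaceT ϱ)
    (hϱlow : ∀ tx : ℝ × V3, ε₀ ≤ ϱ tx) :
    ∃ C : ℝ, 0 < C ∧
      ∀ lam δ ℓ : ℝ, 1 ≤ lam → 0 < δ → δ ≤ 1 → 1 ≤ lam * δ ^ ((1 : ℝ) / 2) →
        0 < ℓ → ℓ < 1 →
      ∀ m : ℝ × V3 → V3, ContDiff ℝ (⊤ : ℕ∞) m → PerSpaceT m →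
        (∀ t ∈ Set.Icc (0 : ℝ) T, ∀ x : V3, ‖m (t, x)‖ ≤ M) →
        (∀ t ∈ Set.Icc (0 : ℝ) T, ∀ x : V3, ∀ n : ℕ, n ≤ 1 →
          ‖iteratedFDeriv ℝ n (fun y => m (t, y)) x‖ ≤ M * lam * δ ^ ((1 : ℝ) / 2)) →
      ∀ N : ℕ, N ≤ Nbar → ∀ n : ℕ, n ≤ N → ∀ t ∈ Set.Icc (0 : ℝ) T, ∀ x : V3,
        ‖iteratedFDeriv ℝ n (fun y => Qcomm φ ℓ ϱ m (t, y)) x‖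
          ≤ C * ℓ ^ ((1 : ℝ) - N) * (lam * δ ^ ((1 : ℝ) / 2)) ^ 2 := by
  have hr : ContDiff ℝ (⊤ : ℕ∞) fun tx => (ϱ tx)⁻¹ :=
    hϱ.inv fun tx => (hε₀.trans_le (hϱlow tx)).ne'
  have hrper : PerSpaceT fun tx => (ϱ tx)⁻¹ := fun t x v => congrArg _ (hϱper t x v)
  choose ρ hρ0 hρ using exists_norm_iteratedFDeriv_slice_le hr hrper T
  have hη := hφ.isSymbol
  have hφ0 : φ 0 = 1 := hφ.2.2.1 0 (by simp [enorm3])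
  have hone : ∀ (R : ℝ), 1 ≤ R → ∀ j : Fin 3, φ (latt R (Pi.single j 1)) = 1 := fun R hR j =>
    hφ.apply_latt_eq_one hR (by rw [Finset.sum_eq_single j] <;> simp +contextual)
  have hneg : ∀ (R : ℝ), 1 ≤ R → ∀ j : Fin 3, φ (latt R (-Pi.single j 1)) = 1 := fun R hR j =>
    hφ.apply_latt_eq_one hR (by rw [Finset.sum_eq_single j] <;> simp +contextual)
  obtain ⟨B, hB⟩ := exists_orderAt_quadratic_commutator hη (by simp [hφ0])
    (fun R hR j => by simp [hone R hR j]) (fun R hR j => by simp [hneg R hR j]) ρ hρ0 M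
    (zero_le_one.trans hM)
  refine ⟨1 + ∑ n ∈ Finset.range (Nbar + 1), 18 * |B (n + 1)|, by positivity,
    fun lam δ ℓ _ hδ _ hΛ hℓ0 hℓ1 m hm hmper hm0 hm1 N hN n hn t ht x => ?_⟩
  set Λ := lam * δ ^ ((1 : ℝ) / 2) with hΛdef
  have hR : 1 ≤ (2 : ℝ) ^ Jof ℓ⁻¹ := one_le_two_zpow_Jof ((one_le_inv₀ hℓ0).2 hℓ1.le)
  set R := (2 : ℝ) ^ Jof ℓ⁻¹ with hRdef
  have hR0 : 0 < R := by linarith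
  have hmt : ContDiff ℝ (⊤ : ℕ∞) fun y => m (t, y) := hm.comp (contDiff_const.prodMk contDiff_id)
  have hmti : ∀ i, ContDiff ℝ (⊤ : ℕ∞) fun y => m (t, y) i := fun i => contDiff_pi.1 hmt i
  have hrt : ContDiff ℝ (⊤ : ℕ∞) fun y => (ϱ (t, y))⁻¹ :=
    hr.comp (contDiff_const.prodMk contDiff_id)
  let f : Fin 3 → C(V3, ℝ) := fun i => ⟨fun y => m (t, y) i, (hmti i).continuous⟩
  let r : C(V3, ℝ) := ⟨fun y => (ϱ (t, y))⁻¹, hrt.continuous⟩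
  have hfper : ∀ i, PerSpace (f i) := fun i y v => congrFun (hmper t y v) i
  have hfM : ∀ i y, |f i y| ≤ M := fun i y => (norm_le_pi_norm (m (t, y)) i).trans (hm0 t ht y)
  have hfL : ∀ i x y, |f i y - f i x| ≤ M * Λ * ‖x - y‖ := fun i =>
    abs_sub_le_of_norm_iteratedFDeriv_one_le (hmti i) fun y => by
      refine (((ContinuousLinearMap.proj (R := ℝ) (φ := fun _ : Fin 3 => ℝ) i)
        |>.norm_iteratedFDeriv_comp_left (x := y) (n := (1 : ℕ)) hmt.contDiffAt
        (by exact_mod_cast le_top)).trans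
        (mul_le_of_le_one_left (norm_nonneg _) ?_)).trans
        ((hm1 t ht y 1 le_rfl).trans_eq (mul_assoc _ _ _))
      exact ContinuousLinearMap.opNorm_le_bound _ zero_le_one fun v => by
        rw [one_mul]; exact norm_le_pi_norm v i
  let G : Fin 3 → Fin 3 → V3 → ℝ := fun i j z =>
    r z * (lowPass hη hR0 (f i) z * lowPass hη hR0 (f j) z) - lowPass hη hR0 (f i * f j * r) z
  have hG : ∀ i j x, OrderAt B Λ R 2 2 (G i j) x := fun i j =>
    hB R hR hR0 Λ hΛ (f i) (f j) r hrt (hfper i) (hfper j) (fun y v => hrper t y v)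
      (fun n y => hρ n t ht y) (hfM i) (hfM j) (hfL i) (hfL j)
  have hGeq : ∀ i j, (fun z => PseV φ ℓ⁻¹ m (t, z) i * PseV φ ℓ⁻¹ m (t, z) j / ϱ (t, z)
      - PseT φ ℓ⁻¹ (fun s' => m s' i * m s' j / ϱ s') (t, z)) = G i j := fun i j => by
    funext z
    simp only [div_eq_mul_inv]
    rw [mul_comm _ (ϱ (t, z))⁻¹]
    rfl
  have hQ : (fun y => Qcomm φ ℓ ϱ m (t, y)) =
      fun y => (fun i => ∑ j, fderiv ℝ (G i j) y (e3 j) : V3) := by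
    simp only [← hGeq]
    rfl
  have hGn : ∀ i j, ‖iteratedFDeriv ℝ (n + 1) (G i j) x‖ ≤
      2 * |B (n + 1)| * ℓ ^ ((1 : ℝ) - N) * Λ ^ 2 := fun i j => by
    have h1 := pow_succ_le_mul_rpow hR hℓ0 hℓ1 (two_zpow_Jof_le (inv_pos.2 hℓ0))
      (le_two_mul_two_zpow_Jof (inv_pos.2 hℓ0)) hn
    refine le_of_mul_le_mul_left ?_ (by positivity : 0 < R ^ 2)
    calc R ^ 2 * ‖iteratedFDeriv ℝ (n + 1) (G i j) x‖ ≤ B (n + 1) * Λ ^ 2 * R ^ (n + 1) :=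
          (hG i j x).bound (n + 1)
      _ ≤ |B (n + 1)| * Λ ^ 2 * (2 * ℓ ^ ((1 : ℝ) - N) * R ^ 2) := by
          gcongr
          exact le_abs_self _
      _ = _ := by ring
  rw [hQ]
  calc _ ≤ ∑ i, ∑ j, ‖iteratedFDeriv ℝ (n + 1) (G i j) x‖ :=
        norm_iteratedFDeriv_div_le (fun i j => (hG i j x).contDiff) n x
    _ ≤ ∑ _i : Fin 3, ∑ _j : Fin 3, 2 * |B (n + 1)| * ℓ ^ ((1 : ℝ) - N) * Λ ^ 2 :=
        Finset.sum_le_sum fun i _ => Finset.sum_le_sum fun j _ => hGn i j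
    _ = 18 * |B (n + 1)| * ℓ ^ ((1 : ℝ) - N) * Λ ^ 2 := by
        simp only [Finset.sum_const, Finset.card_univ, Fintype.card_fin, nsmul_eq_mul]
        push_cast
        ring
    _ ≤ _ := by
        gcongr
        refine (Finset.single_le_sum (f := fun n => 18 * |B (n + 1)|) (fun _ _ => by positivity)
          (Finset.mem_range.2 (by omega : n < Nbar + 1))).trans ?_
        linarith
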